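/- arXiv:1604.00941 — 5 statements merged into one kernel-verified Lean document; each statement's English description precedes it below -/
import Mathlib

section
/- Let a, b ∈ ℝ and let u, v : ℍ → ℂ be holomorphic functions such that for all τ ∈ ℍ one has u(τ) − v(τ) = aτ − b and u(τ), v(τ) ∉ ℤτ + ℤ. Define M̂_{a,b}(τ) := −√2 · e(a(b+1/2)) · e^{−πia²τ} · μ̂(u(τ), v(τ); τ). Then for all τ = x + iy ∈ ℍ one has ξ_{1/2}(M̂_{a,b})(τ) = conj( g_{a+1/2, b+1/2}(−conj(τ)) ), where ξ_{1/2}(f)(τ) := 2i·y^{1/2}·conj( (1/2)(∂f/∂x + i·∂f/∂y)(τ) ) is the weight-1/2 xi-operator (expressed via the Wirtinger derivative ∂/∂τ̄ = (1/2)(∂/∂x + i∂/∂y)). -/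
open Complex

/-- Zwegers' Jacobi theta function
`ϑ(v;τ) = ∑_{n∈ℤ} e^{2πi(n+1/2)(v+1/2)} e^{πiτ(n+1/2)²}`. -/
noncomputable def jacobiThetaZw (v τ : ℂ) : ℂ :=
  ∑' n : ℤ, Complex.exp (2 * (Real.pi : ℂ) * I * ((n : ℂ) + 1/2) * (v + 1/2)) *
    Complex.exp ((Real.pi : ℂ) * I * τ * ((n : ℂ) + 1/2) ^ 2)

/-- Zwegers' μ-function
`μ(u,v;τ) = (e^{πiu}/ϑ(v;τ)) ∑_{n∈ℤ} (−1)ⁿ e^{2πinv} e^{πiτn(n+1)}/(1 − e^{2πiu}e^{2πinτ})`. -/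
noncomputable def muZw (u v τ : ℂ) : ℂ :=
  Complex.exp ((Real.pi : ℂ) * I * u) / jacobiThetaZw v τ *
    ∑' n : ℤ, (-1 : ℂ) ^ n * Complex.exp (2 * (Real.pi : ℂ) * I * (n : ℂ) * v) *
      Complex.exp ((Real.pi : ℂ) * I * τ * (n : ℂ) * ((n : ℂ) + 1)) /
      (1 - Complex.exp (2 * (Real.pi : ℂ) * I * u) * Complex.exp (2 * (Real.pi : ℂ) * I * (n : ℂ) * τ))

/-- Zwegers' nonholomorphic completion term `R(u;τ)`, indexed by `ν = n + 1/2`, `n ∈ ℤ`. -/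
noncomputable def Rzw (u τ : ℂ) : ℂ :=
  ∑' n : ℤ,
    (((Real.sign ((n : ℝ) + 1/2) -
        2 * ∫ t in (0:ℝ)..(((n : ℝ) + 1/2 + u.im / τ.im) * Real.sqrt (2 * τ.im)),
          Real.exp (-Real.pi * t ^ 2)) : ℝ) : ℂ) *
      (-1 : ℂ) ^ n *
      Complex.exp (-(Real.pi : ℂ) * I * ((n : ℂ) + 1/2) ^ 2 * τ -
        2 * (Real.pi : ℂ) * I * ((n : ℂ) + 1/2) * u)

/-- The completed μ-function `μ̂(u,v;τ) = μ(u,v;τ) + (i/2)R(u−v;τ)`. -/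
noncomputable def muHat (u v τ : ℂ) : ℂ := muZw u v τ + I/2 * Rzw (u - v) τ

/-- Zwegers' unary theta function
`g_{a,b}(τ) = ∑_{n∈ℤ} (n+a) e^{2πib(n+a)} e^{πiτ(n+a)²}`. -/
noncomputable def gUnary (a b : ℝ) (τ : ℂ) : ℂ :=
  ∑' n : ℤ, ((n : ℂ) + a) * Complex.exp (2 * (Real.pi : ℂ) * I * b * ((n : ℂ) + a)) *
    Complex.exp ((Real.pi : ℂ) * I * τ * ((n : ℂ) + a) ^ 2)

/-- `M̂_{a,b}(τ) = −√2 e(a(b+1/2)) e^{−πia²τ} μ̂(u(τ), v(τ); τ)`. -/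
noncomputable def MHat (a b : ℝ) (u v : ℂ → ℂ) (σ : ℂ) : ℂ :=
  -(Real.sqrt 2 : ℂ) * Complex.exp (2 * (Real.pi : ℂ) * I * ((a : ℂ) * ((b : ℂ) + 1/2))) *
    Complex.exp (-(Real.pi : ℂ) * I * (a : ℂ) ^ 2 * σ) * muHat (u σ) (v σ) σ


namespace XiAux
open Filter Topology

noncomputable def qP (Q : ℂ) (m : ℕ) : ℂ := ∏ k ∈ Finset.range m, (1 - Q ^ (k + 1))

noncomputable def qr (Q : ℂ) (m : ℤ) : ℂ := if m < 0 then 0 else (qP Q m.toNat)⁻¹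

lemma one_sub_pow_ne {Q : ℂ} (hQ : ‖Q‖ < 1) (k : ℕ) : 1 - Q ^ (k + 1) ≠ 0 := by
  intro h
  have h1 : Q ^ (k+1) = 1 := by linear_combination -h
  have h2 : ‖Q‖ ^ (k+1) = 1 := by rw [← norm_pow, h1, norm_one]
  have h3 : ‖Q‖ ^ (k+1) < 1 := pow_lt_one₀ (norm_nonneg _) hQ (by omega)
  linarith

lemma qP_ne {Q : ℂ} (hQ : ‖Q‖ < 1) (m : ℕ) : qP Q m ≠ 0 :=
  Finset.prod_ne_zero_iff.mpr fun k _ => one_sub_pow_ne hQ k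

lemma qr_rec {Q : ℂ} (hQ : ‖Q‖ < 1) (m : ℤ) : qr Q (m - 1) = (1 - Q ^ m) * qr Q m := by
  rcases lt_trichotomy m 0 with h | h | h
  · simp [qr, h, show m - 1 < 0 by omega]
  · subst h; simp [qr]
  · obtain ⟨k, rfl⟩ : ∃ k : ℕ, m = k + 1 := ⟨(m-1).toNat, by omega⟩
    have h1 : ((k:ℤ) + 1 - 1).toNat = k := by omega
    have h2 : ((k:ℤ) + 1).toNat = k + 1 := by omega
    have e : Q ^ ((k:ℤ)+1) = Q ^ (k+1) := by exact_mod_cast zpow_natCast Q (k+1)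
    have h3 := one_sub_pow_ne hQ k
    have h4 := qP_ne hQ k
    rw [qr, qr, if_neg (by omega), if_neg (by omega), h1, h2, e]
    rw [show qP Q (k+1) = qP Q k * (1 - Q^(k+1)) from Finset.prod_range_succ _ _]
    field_simp

noncomputable def tc (Q : ℂ) (N : ℕ) (n : ℤ) : ℂ := qP Q (2*N) * qr Q (N + n) * qr Q (N - n)

lemma tc_rec {Q : ℂ} (hQ : ‖Q‖ < 1) (hQ0 : Q ≠ 0) (N : ℕ) (n : ℤ) :
    tc Q (N+1) n = (1 + Q ^ (2*N+1)) * tc Q N n + Q ^ ((N:ℤ)+1-n) * tc Q N (n-1)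
      + Q ^ ((N:ℤ)+1+n) * tc Q N (n+1) := by
  have hP : qP Q (2*(N+1)) = qP Q (2*N) * (1 - Q^(2*N+1)) * (1 - Q^(2*N+2)) := by
    rw [show 2*(N+1) = 2*N+1+1 by ring]
    simp only [qP, Finset.prod_range_succ]
  have a1 : qr Q (N + n) = (1 - Q ^ ((N:ℤ)+1+n)) * qr Q (N+1+n) := by
    rw [← qr_rec hQ]; congr 1; ring
  have a2 : qr Q (N + (n-1)) = (1 - Q ^ ((N:ℤ)+1+n) / Q) * ((1 - Q ^ ((N:ℤ)+1+n)) * qr Q (N+1+n)) := by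
    rw [← a1, div_eq_mul_inv, ← zpow_sub_one₀ hQ0, show (N:ℤ)+1+n-1 = N + n by ring, ← qr_rec hQ]; congr 1; ring
  have b1 : qr Q (N - n) = (1 - Q ^ ((N:ℤ)+1-n)) * qr Q (N+1-n) := by
    rw [← qr_rec hQ]; congr 1; ring
  have b2 : qr Q (N - (n+1)) = (1 - Q ^ ((N:ℤ)+1-n) / Q) * ((1 - Q ^ ((N:ℤ)+1-n)) * qr Q (N+1-n)) := by
    rw [← b1, div_eq_mul_inv, ← zpow_sub_one₀ hQ0, show (N:ℤ)+1-n-1 = N - n by ring, ← qr_rec hQ]; congr 1; ring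
  have c1 : Q ^ (2*N+2) = Q ^ ((N:ℤ)+1+n) * Q ^ ((N:ℤ)+1-n) := by
    rw [← zpow_add₀ hQ0, ← zpow_natCast]; congr 1; push_cast; ring
  have c2 : Q ^ (2*N+1) = Q ^ ((N:ℤ)+1+n) * Q ^ ((N:ℤ)+1-n) / Q := by
    rw [← c1]; field_simp; ring
  simp only [tc]
  rw [hP, a1, a2, b1, b2, c1, c2, show (N:ℤ) + (n+1) = N+1+n by ring,
    show (N:ℤ) - (n-1) = N+1-n by ring]
  push_cast
  generalize Q ^ ((N:ℤ)+1+n) = s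
  generalize Q ^ ((N:ℤ)+1-n) = t
  field_simp
  ring

lemma hasSum_fin {q w : ℂ} (hq : ‖q‖ < 1) (hq0 : q ≠ 0) (hw : w ≠ 0) (N : ℕ) :
    HasSum (fun n : ℤ => tc (q^2) N n * (q ^ (n^2) * w ^ n))
      (∏ k ∈ Finset.range N, ((1 + q^(2*k+1) * w) * (1 + q^(2*k+1) * w⁻¹))) := by
  have hQ : ‖q^2‖ < 1 := by rw [norm_pow]; exact pow_lt_one₀ (norm_nonneg _) hq (by omega)
  induction N with
  | zero =>
    have := hasSum_ite_eq (0:ℤ) (1:ℂ)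
    simp only [Finset.range_zero, Finset.prod_empty]
    convert this using 2 with n
    rcases lt_trichotomy n 0 with h | h | h
    · simp [tc, qr, h, h.ne]
    · subst h; simp [tc, qr, qP]
    · simp [tc, qr, h, h.ne']
  | succ N ih =>
    rw [Finset.prod_range_succ]
    have h1 := ih.mul_left (1 + (q^2)^(2*N+1))
    have h2 := ((Equiv.subRight (1:ℤ)).hasSum_iff.mpr ih).mul_left (q^(2*N+1) * w)
    have h3 := ((Equiv.addRight (1:ℤ)).hasSum_iff.mpr ih).mul_left (q^(2*N+1) * w⁻¹)
    refine (congrArg₂ (fun (f : ℤ → ℂ) (s : ℂ) => HasSum f s) ?_ ?_).mpr ((h1.add h2).add h3)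
    · ext n
      rw [tc_rec hQ (pow_ne_zero _ hq0)]
      simp only [Function.comp, Equiv.subRight_apply, Equiv.coe_addRight]
      have e1 : (q^2) ^ ((N:ℤ)+1-n) * q^(n^2) = q^(2*N+1) * q^((n-1)^2) := by
        rw [← zpow_natCast q 2, ← zpow_mul, ← zpow_natCast q (2*N+1), ← zpow_add₀ hq0, ← zpow_add₀ hq0]
        congr 1; push_cast; ring
      have e2 : (q^2) ^ ((N:ℤ)+1+n) * q^(n^2) = q^(2*N+1) * q^((n+1)^2) := by
        rw [← zpow_natCast q 2, ← zpow_mul, ← zpow_natCast q (2*N+1), ← zpow_add₀ hq0, ← zpow_add₀ hq0]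
        congr 1; push_cast; ring
      rw [zpow_sub_one₀ hw, zpow_add_one₀ hw]
      have e3 : w * w⁻¹ = 1 := mul_inv_cancel₀ hw
      linear_combination (tc (q^2) N (n-1) * w^n) * e1 + (tc (q^2) N (n+1) * w^n) * e2
        - (q^(2*N+1) * q^((n-1)^2) * tc (q^2) N (n-1) * w^n + q^(2*N+1) * q^((n+1)^2) * tc (q^2) N (n+1) * w^n) * e3
    · have e3 : w * w⁻¹ = 1 := mul_inv_cancel₀ hw
      linear_combination ((∏ k ∈ Finset.range N, ((1 + q^(2*k+1) * w) * (1 + q^(2*k+1) * w⁻¹))) * q^(2*(2*N+1))) * e3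

lemma summable_odd {q : ℂ} (hq : ‖q‖ < 1) (w : ℂ) : Summable fun k : ℕ => ‖q^(2*k+1) * w‖ := by
  have : Summable fun k : ℕ => (‖q‖^2)^k := summable_geometric_of_lt_one (by positivity)
    (pow_lt_one₀ (norm_nonneg _) hq (by omega))
  refine (this.mul_left (‖q‖ * ‖w‖)).congr fun k => ?_
  rw [norm_mul, norm_pow]; ring

lemma tendsto_prod_ne {f : ℕ → ℂ} (hf : Summable fun k => ‖f k‖) (h : ∀ k, 1 + f k ≠ 0) :
    ∃ L : ℂ, L ≠ 0 ∧ Tendsto (fun N => ∏ k ∈ Finset.range N, (1 + f k)) atTop (𝓝 L) :=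
  ⟨_, tprod_one_add_ne_zero_of_summable h hf,
    (multipliable_one_add_of_summable hf).hasProd.tendsto_prod_nat⟩

lemma qP_lim {Q : ℂ} (hQ : ‖Q‖ < 1) : ∃ L : ℂ, L ≠ 0 ∧ Tendsto (qP Q) atTop (𝓝 L) := by
  have := tendsto_prod_ne (f := fun k => - Q^(k+1)) (by
    simp only [norm_neg, norm_pow]
    exact (summable_nat_add_iff 1).mpr (summable_geometric_of_lt_one (norm_nonneg _) hQ))
    (fun k => by simpa [← sub_eq_add_neg] using one_sub_pow_ne hQ k)
  simp only [← sub_eq_add_neg] at this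
  exact this

lemma bdd_of_tendsto {f : ℕ → ℂ} {L : ℂ} (h : Tendsto f atTop (𝓝 L)) : ∃ K, 0 ≤ K ∧ ∀ n, ‖f n‖ ≤ K := by
  obtain ⟨K, hK⟩ := h.norm.bddAbove_range
  exact ⟨K, (norm_nonneg _).trans (hK ⟨0, rfl⟩), fun n => hK ⟨n, rfl⟩⟩

/-- nonvanishing of the theta series -/
lemma theta_series_ne {q w : ℂ} (hq : ‖q‖ < 1) (hq0 : q ≠ 0) (hw : w ≠ 0)
    (hs : Summable fun n : ℤ => ‖q ^ (n^2) * w ^ n‖)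
    (h1 : ∀ k : ℕ, 1 + q^(2*k+1) * w ≠ 0) (h2 : ∀ k : ℕ, 1 + q^(2*k+1) * w⁻¹ ≠ 0) :
    ∑' n : ℤ, q ^ (n^2) * w ^ n ≠ 0 := by
  have hQ : ‖q^2‖ < 1 := by rw [norm_pow]; exact pow_lt_one₀ (norm_nonneg _) hq (by omega)
  obtain ⟨A, hA, hA'⟩ := tendsto_prod_ne (summable_odd hq w) h1
  obtain ⟨B, hB, hB'⟩ := tendsto_prod_ne (summable_odd hq w⁻¹) h2
  obtain ⟨L, hL, hL'⟩ := qP_lim hQ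
  obtain ⟨K, hK0, hK⟩ := bdd_of_tendsto hL'
  have hi := hL'.inv₀ hL
  obtain ⟨K', hK0', hK'⟩ := bdd_of_tendsto hi
  have hr : ∀ m : ℤ, ‖qr (q^2) m‖ ≤ K' := by
    intro m
    unfold qr
    split_ifs
    · simpa using hK0'
    · exact hK' _
  have hrlim : ∀ g : ℕ → ℤ, Tendsto g atTop atTop → Tendsto (fun N => qr (q^2) (g N)) atTop (𝓝 L⁻¹) := by
    intro g hg
    have hg2 : Tendsto (fun N => (g N).toNat) atTop atTop := by
      rw [tendsto_atTop] at hg ⊢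
      intro b
      filter_upwards [hg b] with N hN
      omega
    refine (hi.comp hg2).congr' ?_
    filter_upwards [hg.eventually_ge_atTop 0] with N hN
    simp [qr, not_lt.mpr hN]
  have hT := tendsto_tsum_of_dominated_convergence (𝓕 := atTop)
    (f := fun (N : ℕ) (n : ℤ) => tc (q^2) N n * (q ^ (n^2) * w ^ n))
    (g := fun n : ℤ => (L * L⁻¹ * L⁻¹) * (q ^ (n^2) * w ^ n))
    (bound := fun n : ℤ => (K * K' * K') * ‖q ^ (n^2) * w ^ n‖) (hs.mul_left _)
    (by
      intro n
      refine Tendsto.mul_const _ ((Tendsto.mul ?_ ?_).mul ?_)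
      · exact hL'.comp (tendsto_id.const_mul_atTop' (by norm_num))
      · exact hrlim _ (tendsto_atTop_add_const_right _ _ tendsto_natCast_atTop_atTop)
      · exact hrlim _ (tendsto_atTop_add_const_right _ _ tendsto_natCast_atTop_atTop))
    (Eventually.of_forall fun N n => by
      rw [norm_mul, tc, norm_mul, norm_mul]
      gcongr
      · exact hK _
      · exact hr _
      · exact hr _)
  have hAB := hA'.mul hB'
  simp_rw [← Finset.prod_mul_distrib, ← fun N => (hasSum_fin hq hq0 hw N).tsum_eq] at hAB
  have := tendsto_nhds_unique hT hAB
  rw [tsum_mul_left] at this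
  intro h0
  rw [h0, mul_zero] at this
  exact mul_ne_zero hA hB this.symm

end XiAux
namespace XiAux
open Filter Topology

lemma jacobi_eq_series (z τ : ℂ) (n : ℤ) : jacobiTheta₂_term n z τ =
    cexp (Real.pi * I * τ) ^ (n^2) * cexp (2 * Real.pi * I * z) ^ n := by
  rw [jacobiTheta₂_term, ← Complex.exp_int_mul, ← Complex.exp_int_mul, ← Complex.exp_add]
  congr 1; push_cast; ring

lemma thetaZw_eq (v τ : ℂ) : jacobiThetaZw v τ =
    cexp (Real.pi * I * (v + 1/2) + Real.pi * I * τ / 4) * jacobiTheta₂ (v + 1/2 + τ/2) τ := by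
  rw [jacobiThetaZw, jacobiTheta₂, ← tsum_mul_left]
  congr 1; ext n
  rw [jacobiTheta₂_term, ← Complex.exp_add, ← Complex.exp_add]
  congr 1; ring

lemma thetaZw_ne {v τ : ℂ} (hτ : 0 < τ.im) (hv : ∀ m n : ℤ, v ≠ (m:ℂ) * τ + n) :
    jacobiThetaZw v τ ≠ 0 := by
  rw [thetaZw_eq]
  refine mul_ne_zero (Complex.exp_ne_zero _) ?_
  rw [jacobiTheta₂]
  have hs := ((summable_jacobiTheta₂_term_iff (v+1/2+τ/2) τ).mpr hτ).norm
  simp_rw [jacobi_eq_series] at hs ⊢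
  refine theta_series_ne ?_ (Complex.exp_ne_zero _) (Complex.exp_ne_zero _) hs ?_ ?_
  · rw [Complex.norm_exp]
    rw [Real.exp_lt_one_iff]
    have : ((Real.pi:ℂ) * I * τ).re = -(Real.pi * τ.im) := by simp
    rw [this]
    have := mul_pos Real.pi_pos hτ
    linarith
  · intro k h
    have e : cexp (Real.pi * I * τ) ^ (2*k+1) * cexp (2 * Real.pi * I * (v + 1/2 + τ/2)) =
        - cexp (2 * Real.pi * I * (v + (k+1) * τ)) := by
      rw [← Complex.exp_nat_mul, ← Complex.exp_add, neg_eq_neg_one_mul, ← Complex.exp_pi_mul_I,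
        ← Complex.exp_add]
      congr 1; push_cast; ring
    rw [e, ← sub_eq_add_neg, sub_eq_zero, eq_comm, Complex.exp_eq_one_iff] at h
    obtain ⟨n, hn⟩ := h
    have : v + (k+1) * τ = n := by
      have h2 : (2 * Real.pi * I : ℂ) ≠ 0 := Complex.two_pi_I_ne_zero
      apply mul_left_cancel₀ h2; rw [hn]; ring
    apply hv (-(k+1)) n
    push_cast
    linear_combination this
  · intro k h
    have e : cexp (Real.pi * I * τ) ^ (2*k+1) * (cexp (2 * Real.pi * I * (v + 1/2 + τ/2)))⁻¹ =
        - cexp (2 * Real.pi * I * (k * τ - v)) := by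
      have h1 : ∀ x : ℂ, -x = cexp (-(Real.pi * I)) * x := by
        intro x; rw [Complex.exp_neg, Complex.exp_pi_mul_I]; norm_num
      rw [← Complex.exp_nat_mul, ← Complex.exp_neg, ← Complex.exp_add, h1 (cexp _), ← Complex.exp_add]
      congr 1; push_cast; ring
    rw [e, ← sub_eq_add_neg, sub_eq_zero, eq_comm, Complex.exp_eq_one_iff] at h
    obtain ⟨n, hn⟩ := h
    have : k * τ - v = n := by
      have h2 : (2 * Real.pi * I : ℂ) ≠ 0 := Complex.two_pi_I_ne_zero
      apply mul_left_cancel₀ h2; rw [hn]; ring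
    apply hv k (-n)
    push_cast
    linear_combination -this

lemma thetaZw_diff {v : ℂ → ℂ} {τ : ℂ} (hτ : 0 < τ.im) (hv : DifferentiableAt ℂ v τ) :
    DifferentiableAt ℂ (fun σ => jacobiThetaZw (v σ) σ) τ := by
  simp_rw [thetaZw_eq]
  refine DifferentiableAt.mul (by fun_prop) ?_
  have h := (hasFDerivAt_jacobiTheta₂ (v τ + 1/2 + τ/2) hτ).differentiableAt
  have h2 : DifferentiableAt ℂ (fun σ => ((v σ + 1/2 + σ/2 : ℂ), σ)) τ := by fun_prop
  exact DifferentiableAt.comp (f := fun σ => ((v σ + 1/2 + σ/2 : ℂ), σ)) τ h h2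

lemma denom_bound {u σ : ℂ} {K T : ℝ} (hT : 0 < T) (hu : ‖u‖ ≤ K) (hσ : T ≤ σ.im) {n : ℤ}
    (hn : (K + 1) / T < |(n:ℝ)|) :
    1/2 ≤ ‖1 - cexp (2 * Real.pi * I * u) * cexp (2 * Real.pi * I * n * σ)‖ := by
  rw [div_lt_iff₀ hT] at hn
  have hui := (abs_le.mp ((Complex.abs_im_le_norm u).trans hu))
  rw [← Complex.exp_add]
  have hnorm : ‖cexp (2 * Real.pi * I * u + 2 * Real.pi * I * n * σ)‖
      = Real.exp (-(2 * Real.pi * (u.im + n * σ.im))) := by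
    rw [Complex.norm_exp]; congr 1; simp; ring
  have hpi := Real.pi_gt_three
  rcases le_or_gt 0 (n:ℝ) with h | h
  · rw [abs_of_nonneg h] at hn
    have h1 : 1 ≤ u.im + n * σ.im := by nlinarith
    have h2 : Real.exp (-(2 * Real.pi * (u.im + n * σ.im))) ≤ 1/2 := by
      rw [Real.exp_neg, inv_le_comm₀ (Real.exp_pos _) (by norm_num)]
      have := Real.add_one_le_exp (2 * Real.pi * (u.im + n * σ.im))
      nlinarith
    have := norm_sub_norm_le (1:ℂ) (cexp (2 * Real.pi * I * u + 2 * Real.pi * I * n * σ))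
    rw [hnorm, norm_one] at this
    linarith
  · rw [abs_of_neg h] at hn
    have h1 : u.im + n * σ.im ≤ -1 := by nlinarith
    have h2 : 2 ≤ Real.exp (-(2 * Real.pi * (u.im + n * σ.im))) := by
      have := Real.add_one_le_exp (-(2 * Real.pi * (u.im + n * σ.im)))
      nlinarith
    have := norm_sub_norm_le (cexp (2 * Real.pi * I * u + 2 * Real.pi * I * n * σ)) (1:ℂ)
    rw [hnorm, norm_one, norm_sub_rev] at this
    linarith

lemma muZw_diff {u v : ℂ → ℂ}
    (hu : DifferentiableOn ℂ u {z : ℂ | 0 < z.im})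
    (hv : DifferentiableOn ℂ v {z : ℂ | 0 < z.im})
    (hulat : ∀ τ : ℂ, 0 < τ.im → ∀ m n : ℤ, u τ ≠ (m : ℂ) * τ + (n : ℂ))
    (hvlat : ∀ τ : ℂ, 0 < τ.im → ∀ m n : ℤ, v τ ≠ (m : ℂ) * τ + (n : ℂ))
    {τ : ℂ} (hτ : 0 < τ.im) : DifferentiableAt ℂ (fun σ => muZw (u σ) (v σ) σ) τ := by
  have hop : IsOpen {z : ℂ | 0 < z.im} := isOpen_lt continuous_const Complex.continuous_im
  have hua : DifferentiableAt ℂ u τ := hu.differentiableAt (hop.mem_nhds hτ)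
  have hva : DifferentiableAt ℂ v τ := hv.differentiableAt (hop.mem_nhds hτ)
  unfold muZw
  refine DifferentiableAt.mul (DifferentiableAt.div (by fun_prop) (thetaZw_diff hτ hva)
    (thetaZw_ne hτ (hvlat τ hτ))) ?_
  set F : ℤ → ℂ → ℂ := fun n σ => (-1 : ℂ) ^ n * Complex.exp (2 * (Real.pi : ℂ) * I * (n : ℂ) * v σ) *
      Complex.exp ((Real.pi : ℂ) * I * σ * (n : ℂ) * ((n : ℂ) + 1)) /
      (1 - Complex.exp (2 * (Real.pi : ℂ) * I * u σ) * Complex.exp (2 * (Real.pi : ℂ) * I * (n : ℂ) * σ))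
    with hF
  change DifferentiableAt ℂ (fun σ => ∑' n, F n σ) τ
  set T := τ.im / 2 with hTdef
  have hT : 0 < T := by positivity
  have him : ∀ σ ∈ Metric.closedBall τ T, T ≤ σ.im := by
    intro σ hσ
    rw [Metric.mem_closedBall, dist_eq_norm] at hσ
    have := (abs_le.mp ((Complex.abs_im_le_norm (σ - τ)).trans hσ)).1
    rw [Complex.sub_im] at this
    linarith
  have hsub : Metric.closedBall τ T ⊆ {z : ℂ | 0 < z.im} := fun σ hσ => hT.trans_le (him σ hσ)
  have hden : ∀ n : ℤ, ∀ σ : ℂ, 0 < σ.im → 1 - Complex.exp (2 * (Real.pi : ℂ) * I * u σ) *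
      Complex.exp (2 * (Real.pi : ℂ) * I * (n : ℂ) * σ) ≠ 0 := by
    intro n σ hσ h
    rw [← Complex.exp_add, sub_eq_zero, eq_comm, Complex.exp_eq_one_iff] at h
    obtain ⟨k, hk⟩ := h
    have : u σ + n * σ = k := by
      have h2 : (2 * Real.pi * I : ℂ) ≠ 0 := Complex.two_pi_I_ne_zero
      apply mul_left_cancel₀ h2; linear_combination hk
    apply hulat σ hσ (-n) k
    push_cast
    linear_combination this
  have hFd : ∀ n, DifferentiableOn ℂ (F n) {z : ℂ | 0 < z.im} := by
    intro n
    refine DifferentiableOn.div (by fun_prop) (by fun_prop) ?_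
    intro σ hσ
    exact hden n σ hσ
  have hcpt := isCompact_closedBall τ T
  have hB : ∀ n, ∃ B, ∀ σ ∈ Metric.closedBall τ T, ‖F n σ‖ ≤ B := fun n =>
    hcpt.exists_bound_of_continuousOn ((hFd n).continuousOn.mono hsub)
  choose B hB using hB
  obtain ⟨K, hK⟩ := hcpt.exists_bound_of_continuousOn (hu.continuousOn.mono hsub)
  obtain ⟨S, hS⟩ := hcpt.exists_bound_of_continuousOn (f := fun σ => v σ + σ/2)
    ((hv.continuousOn.mono hsub).add (by fun_prop))
  set bd : ℤ → ℝ := fun n => (if |(n:ℝ)| ≤ (K+1)/T then |B n| else 0) +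
    2 * (((|n|:ℤ):ℝ) ^ 0 * Real.exp (-Real.pi * (T * n ^ 2 - 2 * S * |n|))) with hbd
  have hbds : Summable bd := by
    refine Summable.add ?_ ((summable_pow_mul_jacobiTheta₂_term_bound S hT 0).mul_left 2)
    refine summable_of_hasFiniteSupport ?_
    refine (Set.finite_Icc (-⌈(K+1)/T⌉) ⌈(K+1)/T⌉).subset ?_
    intro n hn
    have : |(n:ℝ)| ≤ (K+1)/T := by
      by_contra h
      simp [h] at hn
    have h2 := this.trans (Int.le_ceil _)
    rw [abs_le] at h2
    exact ⟨by exact_mod_cast h2.1, by exact_mod_cast h2.2⟩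
  have hmain : DifferentiableOn ℂ (fun σ => ∑' n, F n σ) (Metric.ball τ T) := by
    refine differentiableOn_tsum_of_summable_norm hbds
      (fun n => (hFd n).mono (Metric.ball_subset_closedBall.trans hsub)) Metric.isOpen_ball ?_
    intro n σ hσ
    have hσ' := Metric.ball_subset_closedBall hσ
    by_cases h : |(n:ℝ)| ≤ (K+1)/T
    · simp only [hbd, if_pos h]
      have h1 := (hB n σ hσ').trans (le_abs_self _)
      have h2 : 0 ≤ 2 * (((|n|:ℤ):ℝ) ^ 0 * Real.exp (-Real.pi * (T * n ^ 2 - 2 * S * |n|))) := by positivity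
      linarith
    · simp only [hbd, if_neg h, pow_zero, one_mul, zero_add]
      have h1 := denom_bound hT (hK σ hσ') (him σ hσ') (not_le.mp h)
      have h2 := norm_jacobiTheta₂_term_le hT ((Complex.abs_im_le_norm _).trans (hS σ hσ')) (him σ hσ') n
      have e : F n σ = (-1 : ℂ) ^ n * jacobiTheta₂_term n (v σ + σ/2) σ /
          (1 - Complex.exp (2 * (Real.pi : ℂ) * I * u σ) * Complex.exp (2 * (Real.pi : ℂ) * I * (n : ℂ) * σ)) := by
        simp only [hF]
        rw [mul_assoc, ← Complex.exp_add, jacobiTheta₂_term]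
        congr 3; ring
      rw [e, norm_div, norm_mul, norm_zpow, norm_neg, norm_one, one_zpow, one_mul,
        div_le_iff₀ (by linarith)]
      refine h2.trans ?_
      have := Real.exp_pos (-Real.pi * (T * n ^ 2 - 2 * S * |n|))
      nlinarith
  exact hmain.differentiableAt (Metric.ball_mem_nhds τ hT)

end XiAux
namespace XiAux
open Filter Topology MeasureTheory

noncomputable def gE (x : ℝ) : ℝ := ∫ t in (0:ℝ)..x, Real.exp (-Real.pi * t ^ 2)

lemma gE_cont : Continuous fun t : ℝ => Real.exp (-Real.pi * t ^ 2) := by fun_prop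

lemma gE_hasDeriv (x : ℝ) : HasDerivAt gE (Real.exp (-Real.pi * x ^ 2)) x :=
  (gE_cont.integral_hasStrictDerivAt 0 x).hasDerivAt

lemma gE_mono : Monotone gE :=
  monotone_of_hasDerivAt_nonneg gE_hasDeriv (fun _ => (Real.exp_pos _).le)

lemma gE_tendsto : Tendsto gE atTop (𝓝 (1/2)) := by
  have h := intervalIntegral_tendsto_integral_Ioi (μ := volume) (f := fun t : ℝ => Real.exp (-Real.pi * t ^ 2)) 0
    (integrable_exp_neg_mul_sq Real.pi_pos).integrableOn tendsto_id
  rw [integral_gaussian_Ioi, div_self Real.pi_pos.ne', Real.sqrt_one] at h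
  exact h

lemma gE_le (x : ℝ) : gE x ≤ 1/2 := gE_mono.ge_of_tendsto gE_tendsto x

lemma gE_zero : gE 0 = 0 := by simp [gE]

lemma gE_neg (x : ℝ) : gE (-x) = - gE x := by
  have := intervalIntegral.integral_comp_neg (a := 0) (b := x) (fun t : ℝ => Real.exp (-Real.pi * t ^ 2))
  simp only [neg_sq, neg_zero] at this
  rw [gE, gE, this, intervalIntegral.integral_symm]

lemma gE_tail {s : ℝ} (hs : 0 ≤ s) : |1 - 2 * gE s| ≤ Real.exp (-Real.pi * s ^ 2) := by
  rw [abs_of_nonneg (by linarith [gE_le s])]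
  have h : ∀ᶠ R in atTop, gE R ≤ gE s + Real.exp (-Real.pi * s^2) * (1/2) := by
    filter_upwards [eventually_ge_atTop s] with R hR
    have h1 : gE s + ∫ t in s..R, Real.exp (-Real.pi * t ^ 2) = gE R :=
      intervalIntegral.integral_add_adjacent_intervals
        (gE_cont.intervalIntegrable _ _) (gE_cont.intervalIntegrable _ _)
    have h2 := intervalIntegral.integral_comp_add_right (a := 0) (b := R - s)
      (fun t : ℝ => Real.exp (-Real.pi * t ^ 2)) s
    rw [zero_add, sub_add_cancel] at h2
    have h3 : ∫ t in (0:ℝ)..(R-s), Real.exp (-Real.pi * (t + s) ^ 2) ≤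
        ∫ t in (0:ℝ)..(R-s), Real.exp (-Real.pi * s^2) * Real.exp (-Real.pi * t^2) := by
      refine intervalIntegral.integral_mono_on (by linarith)
        (Continuous.intervalIntegrable (by fun_prop) _ _)
        (Continuous.intervalIntegrable (by fun_prop) _ _) ?_
      intro t ht
      rw [← Real.exp_add, Real.exp_le_exp]
      have := mul_nonneg Real.pi_pos.le (mul_nonneg ht.1 hs)
      nlinarith
    rw [intervalIntegral.integral_const_mul] at h3
    have h4 := mul_le_mul_of_nonneg_left (gE_le (R-s)) (Real.exp_pos (-Real.pi * s^2)).le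
    rw [gE] at h4
    linarith
  have := le_of_tendsto gE_tendsto h
  linarith

lemma gE_bound {ε s M : ℝ} (hε : ε = 1 ∨ ε = -1) (h : 0 ≤ ε * s ∨ s^2 ≤ M) :
    |ε - 2 * gE s| ≤ 3 * Real.exp (Real.pi * |M|) * Real.exp (-Real.pi * s^2) := by
  have hM : 1 ≤ Real.exp (Real.pi * |M|) := Real.one_le_exp (by positivity)
  have hp := Real.exp_pos (-Real.pi * s^2)
  rcases h with h | h
  · have : |ε - 2 * gE s| ≤ Real.exp (-Real.pi * s^2) := by
      rcases hε with rfl | rfl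
      · exact gE_tail (by linarith)
      · have := gE_tail (s := -s) (by linarith)
        rw [gE_neg, neg_sq] at this
        rw [← abs_neg]
        convert this using 2
        ring
    nlinarith
  · have h1 : |ε - 2 * gE s| ≤ 3 := by
      have h2 := gE_le s
      have h3 := gE_le (-s)
      rw [gE_neg] at h3
      rw [abs_le]
      rcases hε with rfl | rfl <;> constructor <;> linarith
    have h2 : 1 ≤ Real.exp (Real.pi * |M|) * Real.exp (-Real.pi * s^2) := by
      rw [← Real.exp_add]
      apply Real.one_le_exp
      have := mul_le_mul_of_nonneg_left (h.trans (le_abs_self M)) Real.pi_pos.le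
      linarith
    nlinarith

lemma summable_W (β : ℝ) {T : ℝ} (hT : 0 < T) :
    Summable fun n : ℤ => (1 + ((n:ℝ) + β)^2) * Real.exp (-Real.pi * ((n:ℝ)+β)^2 * T) := by
  have h0 := (summable_pow_mul_jacobiTheta₂_term_bound (T*|β|) hT 0).mul_left (1 + 2*β^2)
  have h2 := (summable_pow_mul_jacobiTheta₂_term_bound (T*|β|) hT 2).mul_left 2
  refine Summable.of_nonneg_of_le (fun n => by positivity) (fun n => ?_) (h0.add h2)
  have e : Real.exp (-Real.pi * ((n:ℝ)+β)^2 * T) ≤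
      Real.exp (-Real.pi * (T * n ^ 2 - 2 * (T*|β|) * |n|)) := by
    rw [Real.exp_le_exp]
    have h1 : -(|β| * |(n:ℝ)|) ≤ β * n := by rw [← abs_mul]; exact neg_abs_le _
    have h3 : (n:ℝ)^2 - 2 * |β| * |(n:ℝ)| ≤ ((n:ℝ)+β)^2 := by nlinarith [sq_nonneg β]
    have h4 := mul_le_mul_of_nonneg_left h3 (mul_pos Real.pi_pos hT).le
    push_cast
    linarith
  have e2 : (1 + ((n:ℝ) + β)^2) ≤ (1 + 2*β^2) + 2 * ((|n|:ℤ):ℝ)^2 := by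
    push_cast; rw [sq_abs]; nlinarith [sq_nonneg ((n:ℝ) - β)]
  calc _ ≤ ((1 + 2*β^2) + 2 * ((|n|:ℤ):ℝ)^2) * Real.exp (-Real.pi * (T * n ^ 2 - 2 * (T*|β|) * |n|)) := by
        gcongr
    _ = _ := by ring

end XiAux
namespace XiAux
open Filter Topology MeasureTheory

noncomputable def mm (a : ℝ) (n : ℤ) : ℝ := (n:ℝ) + (1/2 + a)
noncomputable def EE (a : ℝ) (n : ℤ) (y : ℝ) : ℝ :=
  Real.sign ((n:ℝ) + 1/2) - 2 * gE (mm a n * Real.sqrt (2 * y))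
noncomputable def cc (b : ℝ) (n : ℤ) : ℂ := (-1 : ℂ) ^ n * cexp (2 * Real.pi * I * ((n:ℂ) + 1/2) * b)
noncomputable def ex (a : ℝ) (n : ℤ) (σ : ℂ) : ℂ := cexp (-(Real.pi : ℂ) * I * (mm a n : ℂ)^2 * σ)
noncomputable def tm (a b : ℝ) (n : ℤ) (σ : ℂ) : ℂ := (EE a n σ.im : ℂ) * cc b n * ex a n σ
noncomputable def AA (a b : ℝ) (n : ℤ) (σ : ℂ) : ℂ :=
  ((-2 * (Real.exp (-Real.pi * (mm a n * Real.sqrt (2 * σ.im))^2) * (mm a n / Real.sqrt (2 * σ.im))) : ℝ) : ℂ)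
    * cc b n * ex a n σ
noncomputable def BB (a b : ℝ) (n : ℤ) (σ : ℂ) : ℂ :=
  (EE a n σ.im : ℂ) * cc b n * (ex a n σ * (-(Real.pi : ℂ) * I * (mm a n : ℂ)^2))

lemma norm_cc (b : ℝ) (n : ℤ) : ‖cc b n‖ = 1 := by
  rw [cc, norm_mul, norm_zpow, norm_neg, norm_one, one_zpow, one_mul,
    show (2 * Real.pi * I * ((n:ℂ) + 1/2) * b : ℂ) = ((2 * Real.pi * ((n:ℝ)+1/2) * b : ℝ) : ℂ) * I by
      push_cast; ring]
  exact Complex.norm_exp_ofReal_mul_I _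

lemma norm_ex (a : ℝ) (n : ℤ) (σ : ℂ) : ‖ex a n σ‖ = Real.exp (Real.pi * (mm a n)^2 * σ.im) := by
  rw [ex, Complex.norm_exp, show (-(Real.pi : ℂ) * I * (mm a n : ℂ)^2 * σ) =
    ((-(Real.pi * mm a n ^2) : ℝ) : ℂ) * (σ * I) by push_cast; ring, Complex.re_ofReal_mul]
  congr 1; simp

lemma sq_ms (a : ℝ) (n : ℤ) {y : ℝ} (hy : 0 < y) :
    (mm a n * Real.sqrt (2 * y))^2 = 2 * (mm a n)^2 * y := by
  rw [mul_pow, Real.sq_sqrt (by positivity)]; ring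

lemma EE_bound (a : ℝ) {T2 : ℝ} (n : ℤ) {y : ℝ} (hy : 0 < y) (hy2 : y ≤ T2) :
    |EE a n y| ≤ 3 * Real.exp (Real.pi * |2 * a^2 * T2|) * Real.exp (-Real.pi * (2 * (mm a n)^2 * y)) := by
  rw [← sq_ms a n hy]
  unfold EE
  have hs : 0 ≤ Real.sqrt (2*y) := Real.sqrt_nonneg _
  rcases le_or_gt 0 n with hn | hn
  · have hn' : (0:ℝ) ≤ n := by exact_mod_cast hn
    rw [Real.sign_of_pos (by linarith)]
    refine gE_bound (Or.inl rfl) ?_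
    rcases le_or_gt 0 (mm a n) with hm | hm
    · left; positivity
    · right
      rw [sq_ms a n hy]
      have : (mm a n)^2 ≤ a^2 := by
        unfold mm at *
        nlinarith
      gcongr
  · have hn' : (n:ℝ) ≤ -1 := by exact_mod_cast (by omega : n ≤ -1)
    rw [Real.sign_of_neg (by linarith)]
    refine gE_bound (Or.inr rfl) ?_
    rcases le_or_gt (mm a n) 0 with hm | hm
    · left
      have := mul_nonneg (neg_nonneg.mpr hm) hs
      linarith
    · right
      rw [sq_ms a n hy]
      have : (mm a n)^2 ≤ a^2 := by
        unfold mm at *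
        nlinarith
      gcongr

/-- the majorant -/
noncomputable def WW (a T : ℝ) (n : ℤ) : ℝ := (1 + (mm a n)^2) * Real.exp (-Real.pi * (mm a n)^2 * T)

lemma summable_WW (a : ℝ) {T : ℝ} (hT : 0 < T) : Summable (WW a T) := summable_W (1/2 + a) hT

lemma EE_ex_bound (a : ℝ) {T1 T2 : ℝ} (n : ℤ) {σ : ℂ} (hT1 : 0 < T1) (h1 : T1 ≤ σ.im) (h2 : σ.im ≤ T2) :
    |EE a n σ.im| * ‖ex a n σ‖ ≤
      3 * Real.exp (Real.pi * |2 * a^2 * T2|) * Real.exp (-Real.pi * (mm a n)^2 * T1) := by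
  have hy : 0 < σ.im := hT1.trans_le h1
  rw [norm_ex]
  calc _ ≤ (3 * Real.exp (Real.pi * |2 * a^2 * T2|) * Real.exp (-Real.pi * (2 * (mm a n)^2 * σ.im))) *
        Real.exp (Real.pi * (mm a n)^2 * σ.im) := by
        gcongr; exact EE_bound a n hy h2
    _ = 3 * Real.exp (Real.pi * |2 * a^2 * T2|) * Real.exp (-Real.pi * (mm a n)^2 * σ.im) := by
        rw [mul_assoc, ← Real.exp_add]; congr 2; ring
    _ ≤ _ := by
        gcongr ?_ * Real.exp ?_
        have := mul_le_mul_of_nonneg_left h1 (mul_nonneg Real.pi_pos.le (sq_nonneg (mm a n)))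
        linarith

lemma tm_bound (a b : ℝ) {T1 T2 : ℝ} (n : ℤ) {σ : ℂ} (hT1 : 0 < T1) (h1 : T1 ≤ σ.im) (h2 : σ.im ≤ T2) :
    ‖tm a b n σ‖ ≤ 3 * Real.exp (Real.pi * |2 * a^2 * T2|) * WW a T1 n := by
  rw [tm, norm_mul, norm_mul, norm_cc, mul_one, Complex.norm_real, Real.norm_eq_abs]
  refine (EE_ex_bound a n hT1 h1 h2).trans ?_
  unfold WW
  gcongr
  have := Real.exp_pos (-Real.pi * (mm a n)^2 * T1)
  nlinarith [sq_nonneg (mm a n)]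

lemma BB_bound (a b : ℝ) {T1 T2 : ℝ} (n : ℤ) {σ : ℂ} (hT1 : 0 < T1) (h1 : T1 ≤ σ.im) (h2 : σ.im ≤ T2) :
    ‖BB a b n σ‖ ≤ Real.pi * (3 * Real.exp (Real.pi * |2 * a^2 * T2|)) * WW a T1 n := by
  have e3 : ‖(-(Real.pi : ℂ) * I * (mm a n : ℂ)^2)‖ = Real.pi * (mm a n)^2 := by
    simp [abs_of_pos Real.pi_pos]
  have e : ‖BB a b n σ‖ = (|EE a n σ.im| * ‖ex a n σ‖) * (Real.pi * (mm a n)^2) := by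
    rw [BB, norm_mul, norm_mul, norm_cc, mul_one, Complex.norm_real, Real.norm_eq_abs, norm_mul, e3, mul_assoc]
  rw [e]
  calc _ ≤ (3 * Real.exp (Real.pi * |2 * a^2 * T2|) * Real.exp (-Real.pi * (mm a n)^2 * T1)) *
        (Real.pi * (1 + (mm a n)^2)) := by
        refine mul_le_mul (EE_ex_bound a n hT1 h1 h2) ?_ (by positivity) (by positivity)
        exact mul_le_mul_of_nonneg_left (by linarith) Real.pi_pos.le
    _ = _ := by unfold WW; ring

lemma AA_bound (a b : ℝ) {T1 : ℝ} (n : ℤ) {σ : ℂ} (hT1 : 0 < T1) (h1 : T1 ≤ σ.im) :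
    ‖AA a b n σ‖ ≤ (2 / Real.sqrt (2*T1)) * WW a T1 n := by
  have hy : 0 < σ.im := hT1.trans_le h1
  rw [AA, norm_mul, norm_mul, norm_cc, mul_one, Complex.norm_real, Real.norm_eq_abs, norm_ex, sq_ms a n hy]
  have hsq : 0 < Real.sqrt (2*T1) := Real.sqrt_pos.mpr (by positivity)
  rw [abs_mul, abs_mul, abs_div, abs_of_pos (Real.exp_pos _), abs_of_nonneg (Real.sqrt_nonneg _)]
  have e1 : Real.exp (-Real.pi * (2 * mm a n ^2 * σ.im)) * Real.exp (Real.pi * (mm a n)^2 * σ.im) ≤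
      Real.exp (-Real.pi * (mm a n)^2 * T1) := by
    rw [← Real.exp_add, Real.exp_le_exp]
    have := mul_le_mul_of_nonneg_left h1 (mul_nonneg Real.pi_pos.le (sq_nonneg (mm a n)))
    linarith
  have e2 : |mm a n| / Real.sqrt (2 * σ.im) ≤ (1 + (mm a n)^2) / Real.sqrt (2 * T1) := by
    gcongr
    rw [← sq_abs]
    nlinarith [sq_nonneg (|mm a n| - 1)]
  calc _ = 2 * (|mm a n| / Real.sqrt (2 * σ.im)) * (Real.exp (-Real.pi * (2 * mm a n ^2 * σ.im)) * Real.exp (Real.pi * (mm a n)^2 * σ.im)) := by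
        norm_num; ring
    _ ≤ 2 * ((1 + (mm a n)^2) / Real.sqrt (2 * T1)) * Real.exp (-Real.pi * (mm a n)^2 * T1) := by
        gcongr
    _ = _ := by unfold WW; ring

lemma tm_hasDeriv (a b : ℝ) (n : ℤ) (τ d : ℂ) (t : ℝ) (h : 0 < (τ + t * d).im) :
    HasDerivAt (fun t : ℝ => tm a b n (τ + t * d))
      ((d.im : ℂ) * AA a b n (τ + t * d) + d * BB a b n (τ + t * d)) t := by
  have him : ∀ t : ℝ, (τ + t * d).im = τ.im + t * d.im := by intro t; simp
  have hlin : HasDerivAt (fun t : ℝ => τ.im + t * d.im) d.im t := by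
    simpa using ((hasDerivAt_id t).mul_const d.im).const_add τ.im
  have hsq := ((hlin.const_mul 2).sqrt (by rw [← him]; positivity)).const_mul (mm a n)
  have hg := ((gE_hasDeriv _).comp t hsq).const_mul 2
  have hE := (hg.const_sub (Real.sign ((n:ℝ) + 1/2))).ofReal_comp
  have hlinC : HasDerivAt (fun t : ℝ => τ + (t:ℂ) * d) d t := by
    simpa using ((Complex.ofRealCLM.hasDerivAt (x := t)).mul_const d).const_add τ
  have hex := (hlinC.const_mul (-(Real.pi : ℂ) * I * (mm a n : ℂ)^2)).cexp
  have := (hE.mul_const (cc b n)).mul hex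
  unfold tm EE ex
  simp only [him]
  refine this.congr_deriv ?_
  simp only [AA, BB, EE, ex, him, Function.comp]
  push_cast
  field_simp

lemma tsum_hasDeriv (a b : ℝ) {τ d : ℂ} (hτ : 0 < τ.im) (hd : ‖d‖ ≤ 1) :
    HasDerivAt (fun t : ℝ => ∑' n, tm a b n (τ + t * d))
      ((d.im : ℂ) * (∑' n, AA a b n τ) + d * ∑' n, BB a b n τ) 0 := by
  set T1 := τ.im / 2 with hT1d
  set T2 := 2 * τ.im with hT2d
  have hT1 : 0 < T1 := by positivity
  have him : ∀ t : ℝ, t ∈ Metric.ball (0:ℝ) T1 → T1 ≤ (τ + t * d).im ∧ (τ + t * d).im ≤ T2 := by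
    intro t ht
    have h0 : (τ + t * d).im = τ.im + t * d.im := by simp
    rw [Metric.mem_ball, dist_zero_right, Real.norm_eq_abs] at ht
    have h1 : |t * d.im| ≤ T1 := by
      rw [abs_mul]
      have := (Complex.abs_im_le_norm d).trans hd
      nlinarith [abs_nonneg t, abs_nonneg d.im]
    rw [abs_le] at h1
    rw [h0]
    constructor <;> linarith
  have hW := summable_WW a hT1
  set C := 3 * Real.exp (Real.pi * |2 * a^2 * T2|) with hC
  have h0m : (0:ℝ) ∈ Metric.ball (0:ℝ) T1 := Metric.mem_ball_self hT1
  have key := hasDerivAt_tsum_of_isPreconnected (𝕜 := ℝ) (y₀ := (0:ℝ)) (y := (0:ℝ)) (t := Metric.ball (0:ℝ) T1)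
    (g := fun n (t : ℝ) => tm a b n (τ + t * d))
    (g' := fun n (t : ℝ) => (d.im : ℂ) * AA a b n (τ + t * d) + d * BB a b n (τ + t * d))
    (u := fun n => (2 / Real.sqrt (2*T1)) * WW a T1 n + Real.pi * C * WW a T1 n)
    ((hW.mul_left _).add (hW.mul_left _)) Metric.isOpen_ball (convex_ball _ _).isPreconnected
    (fun n t ht => tm_hasDeriv a b n τ d t (hT1.trans_le (him t ht).1))
    (fun n t ht => by
      refine (norm_add_le _ _).trans ?_
      rw [norm_mul, norm_mul, Complex.norm_real, Real.norm_eq_abs]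
      have hA := AA_bound a b n hT1 (him t ht).1
      have hB := BB_bound a b n hT1 (him t ht).1 (him t ht).2
      have := (Complex.abs_im_le_norm d).trans hd
      refine add_le_add ?_ ?_
      · exact (mul_le_of_le_one_left (norm_nonneg _) this).trans hA
      · exact (mul_le_of_le_one_left (norm_nonneg _) hd).trans hB)
    h0m
    (Summable.of_norm_bounded (hW.mul_left C) fun n => tm_bound a b n hT1 (him 0 h0m).1 (him 0 h0m).2)
    h0m
  refine key.congr_deriv ?_
  have ha : T1 ≤ τ.im := by linarith
  have hb : τ.im ≤ T2 := by linarith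
  simp only [Complex.ofReal_zero, zero_mul, add_zero]
  rw [Summable.tsum_add, tsum_mul_left, tsum_mul_left]
  · exact (Summable.of_norm_bounded (hW.mul_left _) fun n => AA_bound a b n hT1 ha).mul_left _
  · exact (Summable.of_norm_bounded (hW.mul_left _) fun n => BB_bound a b n hT1 ha hb).mul_left _

lemma Rzw_eq (a b : ℝ) {σ : ℂ} (hσ : 0 < σ.im) :
    cexp (-(Real.pi : ℂ) * I * (a : ℂ) ^ 2 * σ) * Rzw ((a:ℂ) * σ - b) σ = ∑' n, tm a b n σ := by
  rw [Rzw, ← tsum_mul_left]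
  congr 1; ext n
  have h1 : ((a:ℂ) * σ - b).im / σ.im = a := by
    simp [hσ.ne']
  rw [h1, tm, EE, gE, mm, ex, cc, mm, add_assoc (n:ℝ)]
  have e : cexp (-(Real.pi : ℂ) * I * (a : ℂ) ^ 2 * σ) * cexp (-(Real.pi : ℂ) * I * ((n : ℂ) + 1/2) ^ 2 * σ -
        2 * (Real.pi : ℂ) * I * ((n : ℂ) + 1/2) * ((a:ℂ) * σ - b)) =
      cexp (2 * Real.pi * I * ((n:ℂ) + 1/2) * b) * cexp (-(Real.pi : ℂ) * I * (((n:ℝ) + (1/2 + a) : ℝ) : ℂ)^2 * σ) := by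
    rw [← Complex.exp_add, ← Complex.exp_add]
    congr 1; push_cast; ring
  have gen : ∀ X P p q r s : ℂ, p * q = r * s → p * (X * P * q) = X * (P * r) * s := by
    intro X P p q r s h
    linear_combination X * P * h
  exact gen _ _ _ _ _ _ e

lemma MHat_eq (a b : ℝ) {u v : ℂ → ℂ} {σ : ℂ} (hσ : 0 < σ.im)
    (huv : u σ - v σ = (a : ℂ) * σ - (b : ℂ)) :
    MHat a b u v σ = -(Real.sqrt 2 : ℂ) * Complex.exp (2 * (Real.pi : ℂ) * I * ((a : ℂ) * ((b : ℂ) + 1/2))) *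
      (cexp (-(Real.pi : ℂ) * I * (a : ℂ) ^ 2 * σ) * muZw (u σ) (v σ) σ + I/2 * ∑' n, tm a b n σ) := by
  rw [← Rzw_eq a b hσ, MHat, muHat, huv]; ring

lemma shadow_eq (a b : ℝ) {τ : ℂ} (hτ : 0 < τ.im) :
    I * (Real.sqrt τ.im : ℂ) * (-(Real.sqrt 2 : ℂ) * Complex.exp (2 * (Real.pi : ℂ) * I * ((a : ℂ) * ((b : ℂ) + 1/2)))) / 2
      * ∑' n, AA a b n τ = gUnary (a + 1/2) (b + 1/2) (-(starRingEnd ℂ) τ) := by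
  rw [gUnary, ← tsum_mul_left]
  congr 1; ext n
  rw [AA, sq_ms a n hτ]
  have hs : Real.sqrt (2 * τ.im) = Real.sqrt 2 * Real.sqrt τ.im := Real.sqrt_mul (by norm_num) _
  have h2 : (Real.sqrt 2 : ℂ) ≠ 0 := by exact_mod_cast (Real.sqrt_pos.mpr two_pos).ne'
  have hy : (Real.sqrt τ.im : ℂ) ≠ 0 := by exact_mod_cast (Real.sqrt_pos.mpr hτ).ne'
  have hc : (starRingEnd ℂ) τ = τ - 2 * (τ.im : ℂ) * I := by
    apply Complex.ext <;> simp; ring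
  have hcc : I * cc b n = cexp (Real.pi * I * ((n:ℂ) + 1/2)) * cexp (2 * Real.pi * I * ((n:ℂ) + 1/2) * b) := by
    have : cexp (Real.pi * I * ((n:ℂ) + 1/2)) = I * (-1)^n := by
      have h3 : cexp (Real.pi / 2 * I) * cexp (Real.pi * I) ^ n = I * (-1)^n := by
        rw [Complex.exp_pi_div_two_mul_I, Complex.exp_pi_mul_I]
      rw [← h3, ← Complex.exp_int_mul, ← Complex.exp_add]; congr 1; ring
    rw [this, cc]; ring
  have hmm : ((n:ℂ) + ((a + 1/2 : ℝ) : ℂ)) = (mm a n : ℂ) := by unfold mm; push_cast; ring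
  rw [hmm, hs]
  have e : cexp (2 * (Real.pi : ℂ) * I * ((a : ℂ) * ((b : ℂ) + 1/2))) * (I * cc b n) *
      (cexp ((-Real.pi * (2 * mm a n ^ 2 * τ.im) : ℝ) : ℂ) * ex a n τ) =
      cexp (2 * (Real.pi : ℂ) * I * ((b + 1/2 : ℝ) : ℂ) * (mm a n : ℂ)) *
        cexp ((Real.pi : ℂ) * I * (-(starRingEnd ℂ) τ) * (mm a n : ℂ) ^ 2) := by
    rw [hcc, ex, hc]
    simp only [← Complex.exp_add]
    congr 1
    unfold mm
    push_cast
    linear_combination (-2 * Real.pi * τ.im * ((n:ℂ) + (1/2 + a))^2) * Complex.I_sq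
  rw [mul_assoc (mm a n : ℂ), ← e]
  push_cast
  field_simp

lemma line_deriv {H : ℂ → ℂ} {τ : ℂ} (hH : DifferentiableAt ℂ H τ) (d : ℂ) :
    HasDerivAt (fun t : ℝ => H (τ + t * d)) (d * deriv H τ) 0 := by
  have hlinC : HasDerivAt (fun t : ℝ => τ + (t:ℂ) * d) d 0 := by
    simpa using ((Complex.ofRealCLM.hasDerivAt (x := (0:ℝ))).mul_const d).const_add τ
  have h : HasDerivAt H (deriv H τ) (τ + ((0:ℝ):ℂ) * d) := by simpa using hH.hasDerivAt
  have := HasDerivAt.comp (0:ℝ) h hlinC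
  rw [mul_comm]
  exact this

end XiAux

/-- Proposition 2.8(i): `ξ_{1/2}(M̂_{a,b})(τ) = g^c_{a+1/2,b+1/2}(τ)`, where the weight-1/2
ξ-operator is expressed via the Wirtinger derivative `∂/∂τ̄ = (1/2)(∂/∂x + i ∂/∂y)`. -/
theorem xi_MHat_eq_shadow (a b : ℝ) (u v : ℂ → ℂ)
    (hu : DifferentiableOn ℂ u {z : ℂ | 0 < z.im})
    (hv : DifferentiableOn ℂ v {z : ℂ | 0 < z.im})
    (huv : ∀ τ : ℂ, 0 < τ.im → u τ - v τ = (a : ℂ) * τ - (b : ℂ))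
    (hulat : ∀ τ : ℂ, 0 < τ.im → ∀ m n : ℤ, u τ ≠ (m : ℂ) * τ + (n : ℂ))
    (hvlat : ∀ τ : ℂ, 0 < τ.im → ∀ m n : ℤ, v τ ≠ (m : ℂ) * τ + (n : ℂ)) :
    ∀ τ : ℂ, 0 < τ.im →
      2 * I * ((Real.sqrt τ.im : ℝ) : ℂ) *
        (starRingEnd ℂ) ((1/2 : ℂ) *
          (deriv (fun t : ℝ => MHat a b u v (τ + (t : ℂ))) 0 +
            I * deriv (fun t : ℝ => MHat a b u v (τ + (t : ℂ) * I)) 0)) =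
      (starRingEnd ℂ) (gUnary (a + 1/2) (b + 1/2) (-(starRingEnd ℂ) τ)) := by
  intro τ hτ
  set k : ℂ := -(Real.sqrt 2 : ℂ) * Complex.exp (2 * (Real.pi : ℂ) * I * ((a : ℂ) * ((b : ℂ) + 1/2))) with hk
  set H : ℂ → ℂ := fun σ => cexp (-(Real.pi : ℂ) * I * (a : ℂ) ^ 2 * σ) * muZw (u σ) (v σ) σ with hHdef
  have hH : DifferentiableAt ℂ H τ :=
    DifferentiableAt.mul (by fun_prop) (XiAux.muZw_diff hu hv hulat hvlat hτ)
  have hline : ∀ d : ℂ, ‖d‖ ≤ 1 → HasDerivAt (fun t : ℝ => MHat a b u v (τ + t * d))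
      (k * (d * deriv H τ + I/2 * ((d.im : ℂ) * (∑' n, XiAux.AA a b n τ) + d * ∑' n, XiAux.BB a b n τ))) 0 := by
    intro d hd
    have h := ((XiAux.line_deriv hH d).add ((XiAux.tsum_hasDeriv a b hτ hd).const_mul (I/2))).const_mul k
    refine h.congr_of_eventuallyEq ?_
    have hc : Continuous fun t : ℝ => (τ + (t:ℂ) * d).im := by fun_prop
    have : ∀ᶠ t : ℝ in nhds 0, 0 < (τ + (t:ℂ) * d).im :=
      hc.continuousAt.eventually_const_lt (by simpa using hτ)
    filter_upwards [this] with t ht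
    rw [XiAux.MHat_eq a b ht (huv _ ht)]
    rfl
  have h1 := (hline 1 (by simp)).deriv
  have hI := (hline I (by simp)).deriv
  simp only [mul_one] at h1
  rw [h1, hI, ← XiAux.shadow_eq a b hτ, ← hk]
  have hre : (2 * I * ((Real.sqrt τ.im : ℝ) : ℂ)) = (starRingEnd ℂ) (-2 * I * ((Real.sqrt τ.im : ℝ) : ℂ)) := by
    have h2 : (starRingEnd ℂ) (2:ℂ) = 2 := map_ofNat _ 2
    simp [h2]
  rw [hre, ← map_mul]
  congr 1
  simp only [Complex.one_im, Complex.I_im, Complex.ofReal_zero, Complex.ofReal_one]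
  generalize (∑' n, XiAux.AA a b n τ) = A
  generalize (∑' n, XiAux.BB a b n τ) = B
  generalize deriv H τ = D
  generalize ((Real.sqrt τ.im : ℝ) : ℂ) = s
  linear_combination (-(I * s * k * D) - I * s * k * A / 2 - I^2 * s * k * B/2) * Complex.I_sq
end

section
/- Define V̂₁₁(τ) := −e^{−πiτ/16}·μ̂(τ/4 + 1/2, τ/2; τ) for τ ∈ ℍ. Let γ = (a b; c d) ∈ SL₂(ℤ) with a ≡ d ≡ 1 (mod 4), b ≡ 0 (mod 4), and c ≡ 0 (mod 2) (i.e., γ ∈ Γ¹(4) ∩ Γ₀(2)). Set k := (a−1)/4 + c/2, ℓ := b/4 + (d−1)/2, r := (a−1)/2, s := b/2, which are integers. Then for all τ ∈ ℍ: V̂₁₁(γτ)·η(γτ)³ = (−1)^{k+ℓ+r+s} · e( (4 − 4a − ab + 4c)/32 ) · (cτ+d)² · η(τ)³ · V̂₁₁(τ), where γτ = (aτ+b)/(cτ+d). (This is the modular transformation of the completion V̂₁₁ of Theorem 1.1 for (m,n) = (1,1), with the eta-multiplier ψ(γ)⁻³(cτ+d)^{1/2} absorbed by multiplying through by η(γτ)³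 = ψ(γ)³(cτ+d)^{3/2}η(τ)³.) -/
open Complex

/-- The Dedekind eta function `η(τ) = e^{πiτ/12} ∏_{n≥1} (1 - e^{2πinτ})`. -/
noncomputable def dedekindEta (τ : ℂ) : ℂ :=
  Complex.exp ((Real.pi : ℂ) * I * τ / 12) *
    ∏' n : ℕ, (1 - Complex.exp (2 * (Real.pi : ℂ) * I * ((n : ℂ) + 1) * τ))

/-- `V̂₁₁(τ) = −e^{−πiτ/16} μ̂(τ/4 + 1/2, τ/2; τ)`. -/
noncomputable def Vhat11 (τ : ℂ) : ℂ :=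
  -Complex.exp (-(Real.pi : ℂ) * I * τ / 16) * muHat (τ/4 + 1/2) (τ/2) τ

noncomputable def ee (x : ℂ) : ℂ := Complex.exp ((Real.pi : ℂ) * I * x)

lemma ee_add (x y : ℂ) : ee (x + y) = ee x * ee y := by
  unfold ee; rw [← Complex.exp_add]; ring_nf

lemma ee_ne (x : ℂ) : ee x ≠ 0 := Complex.exp_ne_zero _

lemma ee_zero : ee 0 = 1 := by simp [ee]

lemma ee_neg (x : ℂ) : ee (-x) = (ee x)⁻¹ := by
  unfold ee; rw [← Complex.exp_neg]; ring_nf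

lemma ee_two_int (n : ℤ) : ee (2 * n) = 1 := by
  unfold ee; rw [Complex.exp_eq_one_iff]; exact ⟨n, by ring⟩

lemma ee_congr {x y : ℂ} (n : ℤ) (h : x = y + 2 * n) : ee x = ee y := by
  rw [h, ee_add, ee_two_int, mul_one]

lemma ee_one : ee 1 = -1 := by simp [ee, Complex.exp_pi_mul_I]

lemma ee_int (n : ℤ) : ee n = (-1 : ℂ) ^ n := by
  rw [← ee_one]; unfold ee; rw [← Complex.exp_int_mul]; ring_nf

lemma ee_half : ee (1 / 2) = I := by
  unfold ee
  rw [show (Real.pi : ℂ) * I * (1 / 2) = (Real.pi : ℂ) / 2 * I by ring, Complex.exp_pi_div_two_mul_I]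

lemma norm_ee (x : ℂ) : ‖ee x‖ = Real.exp (-(Real.pi * x.im)) := by
  unfold ee; rw [Complex.norm_exp]; simp

noncomputable def Th4 (τ : ℂ) : ℂ := ∑' n : ℤ, ee (n + n ^ 2 * τ)

lemma term_eq (n : ℤ) (z τ : ℂ) : jacobiTheta₂_term n z τ = ee (2 * n * z + n ^ 2 * τ) := by
  unfold jacobiTheta₂_term ee; ring_nf

lemma Th4_eq2 (τ : ℂ) : Th4 τ = jacobiTheta₂ (1 / 2) τ := by
  unfold Th4 jacobiTheta₂
  refine tsum_congr fun n => ?_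
  rw [term_eq]; ring_nf

lemma Th4_term (n : ℤ) (τ : ℂ) : ee (n + n ^ 2 * τ) = ee (n ^ 2 * (τ + 1)) := by
  obtain ⟨k, hk⟩ := Int.even_mul_pred_self n
  refine ee_congr (-k) ?_
  have : (n : ℂ) * (n - 1) = k + k := by exact_mod_cast hk
  push_cast
  linear_combination -this

lemma Th4_eq1 (τ : ℂ) : Th4 τ = jacobiTheta (τ + 1) := by
  unfold Th4 
  rw [jacobiTheta]
  refine tsum_congr fun n => ?_
  rw [Th4_term]; unfold ee; ring_nf

lemma summable_term (z : ℂ) {τ : ℂ} (hτ : 0 < τ.im) :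
    Summable fun n : ℤ => ee (2 * n * z + n ^ 2 * τ) := by
  have := (summable_jacobiTheta₂_term_iff z τ).2 hτ
  simpa only [term_eq] using this

lemma pair_inj : Function.Injective (fun z : ℤ × ℤ => ((z.1 + z.2, z.1 - z.2) : ℤ × ℤ)) := by
  intro z w h
  have h1 := congrArg Prod.fst h
  have h2 := congrArg Prod.snd h
  simp only at h1 h2
  ext <;> omega

lemma pair_sum (f : ℤ × ℤ → ℂ) (hf : Summable f)
    (hodd : ∀ m n : ℤ, Odd (m + n) → f (m, n) + f (n, m) = 0) :
    ∑' z, f z = ∑' z : ℤ × ℤ, (f (z.1 + z.2, z.1 - z.2) + f (z.1 - z.2, z.1 + z.2)) / 2 := by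
  have hfs' : Summable (fun z => f (Equiv.prodComm ℤ ℤ z)) := (Equiv.summable_iff (Equiv.prodComm ℤ ℤ)).2 hf
  have h1 : ∑' z, f z = ∑' z, (f z + f (Equiv.prodComm ℤ ℤ z)) / 2 := by
    rw [tsum_div_const, hf.tsum_add hfs', Equiv.tsum_eq]; ring
  rw [h1]
  have key := pair_inj.tsum_eq (f := fun z => (f z + f (Equiv.prodComm ℤ ℤ z)) / 2) ?_
  · rw [← key]; rfl
  · intro z h
    by_contra hn
    apply h
    have ho : Odd (z.1 + z.2) := by
      by_contra he
      rw [Int.not_odd_iff_even] at he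
      obtain ⟨k, hk⟩ := he
      apply hn
      refine ⟨(k, z.1 - k), ?_⟩
      ext
      · simp
      · simp only; omega
    have := hodd z.1 z.2 ho
    change (f (z.1, z.2) + f (z.2, z.1)) / 2 = 0
    rw [this]; simp

lemma landen_odd (m n : ℤ) (τ : ℂ) (h : Odd (m + n)) :
    ee (m ^ 2 * τ) * ee (n + n ^ 2 * τ) + ee (n ^ 2 * τ) * ee (m + m ^ 2 * τ) = 0 := by
  obtain ⟨k, hk⟩ := h
  have hm : (m : ℂ) = 2 * k + 1 - n := by
    have : (m : ℂ) + n = 2 * k + 1 := by exact_mod_cast hk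
    linear_combination this
  simp only [← ee_add]
  have e1 : ee (↑n ^ 2 * τ + (↑m + ↑m ^ 2 * τ)) = ee (↑m ^ 2 * τ + (↑n + ↑n ^ 2 * τ) + 1) :=
    ee_congr (k - n) (by push_cast; linear_combination hm)
  rw [e1, ee_add _ 1, ee_one]; ring

lemma landen_even (r s : ℤ) (τ : ℂ) :
    ee (r + r ^ 2 * (2 * τ)) * ee (s + s ^ 2 * (2 * τ)) =
    (ee (((r + s : ℤ) : ℂ) ^ 2 * τ) * ee (((r - s : ℤ) : ℂ) + ((r - s : ℤ) : ℂ) ^ 2 * τ)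
    + ee (((r - s : ℤ) : ℂ) ^ 2 * τ) * ee (((r + s : ℤ) : ℂ) + ((r + s : ℤ) : ℂ) ^ 2 * τ)) / 2 := by
  simp only [← ee_add]
  have e1 : ee (((r + s : ℤ) : ℂ) ^ 2 * τ + (((r - s : ℤ) : ℂ) + ((r - s : ℤ) : ℂ) ^ 2 * τ)) = ee (↑r + ↑r ^ 2 * (2 * τ) + (↑s + ↑s ^ 2 * (2 * τ))) :=
    ee_congr (-s) (by push_cast; ring)
  have e2 : ee (((r - s : ℤ) : ℂ) ^ 2 * τ + (((r + s : ℤ) : ℂ) + ((r + s : ℤ) : ℂ) ^ 2 * τ)) = ee (↑r + ↑r ^ 2 * (2 * τ) + (↑s + ↑s ^ 2 * (2 * τ))) :=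
    ee_congr 0 (by push_cast; ring)
  rw [e1, e2]; ring

lemma s4 {τ : ℂ} (hτ : 0 < τ.im) : Summable fun n : ℤ => ee (n + n ^ 2 * τ) := by
  convert summable_term (1/2) hτ using 3; ring

lemma s3 {τ : ℂ} (hτ : 0 < τ.im) : Summable fun n : ℤ => ee (n ^ 2 * τ) := by
  convert summable_term 0 hτ using 3; ring

lemma jT_eq (τ : ℂ) : jacobiTheta τ = ∑' n : ℤ, ee (n ^ 2 * τ) := by
  rw [jacobiTheta]; refine tsum_congr fun n => ?_
  unfold ee; ring_nf

lemma landen {τ : ℂ} (hτ : 0 < τ.im) : Th4 (2 * τ) ^ 2 = jacobiTheta τ * Th4 τ := by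
  have h2 : 0 < (2 * τ).im := by simpa using hτ
  have k1 := (tsum_mul_tsum_of_summable_norm (s4 h2).norm (s4 h2).norm)
  have k2 := tsum_mul_tsum_of_summable_norm (s3 hτ).norm (s4 hτ).norm
  have k5 := summable_mul_of_summable_norm (f := fun n : ℤ => ee (n ^ 2 * τ))
    (g := fun n : ℤ => ee (n + n ^ 2 * τ)) (s3 hτ).norm (s4 hτ).norm
  have k3 := pair_sum _ k5 (fun m n h => landen_odd m n τ h)
  rw [sq, jT_eq]
  exact k1.trans ((tsum_congr fun z : ℤ × ℤ => landen_even z.1 z.2 τ).trans (k3.symm.trans k2.symm))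

lemma Th4_ne {τ : ℂ} (hτ : 0 < τ.im) : Th4 τ ≠ 0 := by
  intro h0
  have hk : ∀ k : ℕ, Th4 (2 ^ k * τ) = 0 := by
    intro k
    induction k with
    | zero => simpa using h0
    | succ k ih =>
      have h2 : 0 < (2 ^ k * τ).im := by
        rw [show ((2 : ℂ) ^ k * τ) = ((2 ^ k : ℝ) : ℂ) * τ by push_cast; ring, Complex.im_ofReal_mul]
        positivity
      have := landen h2
      rw [ih, mul_zero] at this
      rw [pow_succ', mul_assoc]
      exact pow_eq_zero_iff (two_ne_zero) |>.1 this
  obtain ⟨k, hk1⟩ := exists_nat_gt (2 / (Real.pi * τ.im))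
  have hpy : 0 < Real.pi * τ.im := by positivity
  rw [div_lt_iff₀ hpy] at hk1
  have hk2 : (k : ℝ) < 2 ^ k := by exact_mod_cast Nat.lt_two_pow_self
  have him : (2 ^ k * τ + 1).im = 2 ^ k * τ.im := by
    rw [show ((2 : ℂ) ^ k * τ + 1) = ((2 ^ k : ℝ) : ℂ) * τ + 1 by push_cast; ring, Complex.add_im, Complex.im_ofReal_mul]
    simp
  have him0 : 0 < (2 ^ k * τ + 1).im := by rw [him]; positivity
  have hb := norm_jacobiTheta_sub_one_le him0
  rw [← Th4_eq1, hk, him] at hb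
  have h3 : 3 < Real.exp (Real.pi * (2 ^ k * τ.im)) := by
    have := Real.add_one_le_exp (Real.pi * (2 ^ k * τ.im))
    nlinarith
  have hq : Real.exp (-Real.pi * (2 ^ k * τ.im)) < 1 / 3 := by
    rw [neg_mul, Real.exp_neg, one_div]
    exact inv_strictAnti₀ (by norm_num) h3
  set q := Real.exp (-Real.pi * (2 ^ k * τ.im))
  have : (1 : ℝ) ≤ 2 / (1 - q) * q := by simpa using hb
  rw [div_mul_eq_mul_div, le_div_iff₀ (by linarith)] at this
  linarith

lemma eta_eq (τ : ℂ) : dedekindEta τ = ModularForm.eta τ := by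
  unfold dedekindEta ModularForm.eta
  congr 1
  · unfold Function.Periodic.qParam; congr 1; push_cast; ring
  · simp only [ModularForm.eta_q_eq_cexp]

lemma eta_ne {τ : ℂ} (hτ : 0 < τ.im) : dedekindEta τ ≠ 0 := by
  rw [eta_eq]; exact ModularForm.eta_ne_zero hτ

lemma eta_T (τ : ℂ) : dedekindEta (τ + 1) ^ 3 = ee (1 / 4) * dedekindEta τ ^ 3 := by
  unfold dedekindEta
  have : ∀ n : ℕ, Complex.exp (2 * (Real.pi : ℂ) * I * ((n : ℂ) + 1) * (τ + 1)) =
      Complex.exp (2 * (Real.pi : ℂ) * I * ((n : ℂ) + 1) * τ) := by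
    intro n
    rw [mul_add, Complex.exp_add, mul_one]
    have : Complex.exp (2 * (Real.pi : ℂ) * I * ((n : ℂ) + 1)) = 1 :=
      Complex.exp_eq_one_iff.2 ⟨n + 1, by push_cast; ring⟩
    rw [this, mul_one]
  simp only [this]
  rw [mul_pow, mul_pow, ← mul_assoc]
  congr 1
  unfold ee
  rw [← Complex.exp_nat_mul, ← Complex.exp_nat_mul, ← Complex.exp_add]
  congr 1; push_cast; ring

lemma sqrt_aux {τ : ℂ} (hτ : 0 < τ.im) :
    (-I * τ) ^ (1 / 2 : ℂ) * Complex.sqrt I = Complex.sqrt τ := by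
  have h1 : |(-I * τ).arg| < Real.pi / 2 := by
    rw [Complex.abs_arg_lt_pi_div_two_iff]; left; simpa using hτ
  rw [abs_lt] at h1
  have hI : I.arg = Real.pi / 2 := Complex.arg_I
  have hne : -I * τ ≠ 0 := by
    intro h; rw [mul_eq_zero] at h; rcases h with h | h
    · simp at h
    · simp [h] at hτ
  unfold Complex.sqrt
  have h0 : τ ≠ 0 := by rintro rfl; simp at hτ
  have hl : Complex.log (-I * τ * I) = Complex.log (-I * τ) + Complex.log I := by
    apply Complex.log_mul hne I_ne_zero
    constructor <;> rw [hI] <;> linarith [h1.1, h1.2, Real.pi_pos]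
  rw [show -I * τ * I = τ by linear_combination -τ * I_sq] at hl
  rw [one_div, Complex.cpow_def_of_ne_zero hne, Complex.cpow_def_of_ne_zero I_ne_zero,
    Complex.cpow_def_of_ne_zero h0, hl, ← Complex.exp_add]
  ring_nf

lemma sqrt_sq' (z : ℂ) : Complex.sqrt z ^ 2 = z := by
  unfold Complex.sqrt
  rw [← Complex.cpow_nat_mul]; simp

lemma eta_S {τ : ℂ} (hτ : 0 < τ.im) :
    τ * (-I * (-I * τ) ^ (1 / 2 : ℂ)) * dedekindEta τ ^ 3 = dedekindEta (-1 / τ) ^ 3 := by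
  have h := ModularForm.eta_comp_eq_csqrt_I_inv hτ
  simp only [Function.comp_apply, Pi.smul_apply, Pi.mul_apply, smul_eq_mul] at h
  rw [eta_eq, eta_eq, h, ← sqrt_aux hτ]
  have hs := sqrt_sq' I
  have hI : Complex.sqrt I ≠ 0 := by
    intro h0; rw [h0] at hs; exact I_ne_zero (by rw [← hs]; simp)
  have h2 : ((-I * τ) ^ (1 / 2 : ℂ)) ^ 2 = -I * τ := by
    rw [← Complex.cpow_nat_mul]; simp
  set A := (-I * τ) ^ (1 / 2 : ℂ)
  set B := Complex.sqrt I
  rw [show B⁻¹ * (A * B * ModularForm.eta τ) = A * ModularForm.eta τ by field_simp]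
  linear_combination (-A * ModularForm.eta τ ^ 3) * h2

lemma zw_eq (v τ : ℂ) : jacobiThetaZw v τ = ee (v + 1 / 2 + τ / 4) * jacobiTheta₂ (v + 1 / 2 + τ / 2) τ := by
  unfold jacobiThetaZw jacobiTheta₂
  rw [← tsum_mul_left]
  refine tsum_congr fun n => ?_
  rw [term_eq, ← ee_add, ← Complex.exp_add]
  unfold ee; ring_nf

noncomputable def KN (p q τ : ℂ) : ℂ := ee (p * (p * τ + q)) * jacobiThetaZw (p * τ + q) τ

lemma KN_eq (p q τ : ℂ) : KN p q τ =
    ee ((p + 1/2) ^ 2 * τ + (p + 1/2) * (q + 1/2) + (q - p) / 2 + 1 / 4) *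
      jacobiTheta₂ ((p + 1/2) * τ + (q + 1/2)) τ := by
  unfold KN
  rw [zw_eq, ← mul_assoc, ← ee_add]
  ring_nf

lemma KN_T (p q τ : ℂ) : KN p q (τ + 1) = ee (1 / 4) * KN p (p + q) τ := by
  have hJ : ∀ z : ℂ, jacobiTheta₂ z (τ + 1) = jacobiTheta₂ (z - 1 / 2) τ := by
    intro z
    unfold jacobiTheta₂
    refine tsum_congr fun n => ?_
    rw [term_eq, term_eq]
    obtain ⟨k, hk⟩ := Int.even_mul_pred_self n
    have : (n : ℂ) * (n - 1) = k + k := by exact_mod_cast hk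
    exact ee_congr (n + k) (by push_cast; linear_combination this)
  rw [KN_eq, KN_eq, hJ, ← mul_assoc, ← ee_add]
  congr 1
  · congr 1; ring
  · congr 1; ring

lemma KN_S (p q : ℂ) {τ : ℂ} (hτ : 0 < τ.im) :
    KN p q (-1 / τ) = -I * (-I * τ) ^ (1 / 2 : ℂ) * KN q (-p) τ := by
  have h0 : τ ≠ 0 := by rintro rfl; simp at hτ
  have hA : (-I * τ) ^ (1 / 2 : ℂ) ≠ 0 := by
    rw [Ne, Complex.cpow_eq_zero_iff]
    simp [h0]
  rw [KN_eq, KN_eq]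
  rw [show (q + 1 / 2) * τ + (-p + 1 / 2) = ((q + 1 / 2) * τ - (p + 1 / 2)) + 1 by ring,
    jacobiTheta₂_add_left, jacobiTheta₂_functional_equation ((q + 1 / 2) * τ - (p + 1 / 2)) τ]
  rw [show ((q + 1 / 2) * τ - (p + 1 / 2)) / τ = (p + 1 / 2) * (-1 / τ) + (q + 1 / 2) by field_simp; ring]
  generalize jacobiTheta₂ ((p + 1 / 2) * (-1 / τ) + (q + 1 / 2)) (-1 / τ) = J
  have e1 : Complex.exp (-(Real.pi : ℂ) * I * ((q + 1 / 2) * τ - (p + 1 / 2)) ^ 2 / τ) =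
    ee (-((q + 1 / 2) * τ - (p + 1 / 2)) ^ 2 / τ) := by unfold ee; ring_nf
  rw [e1]
  have e2 : -I = ee (-(1 / 2)) := by rw [ee_neg, ee_half]; simp
  generalize (-I * τ) ^ (1 / 2 : ℂ) = A at hA
  rw [show ∀ a b c : ℂ, -I * A * (a * (1 / A * b * c)) = (-I * a * b) * c by intro a b c; field_simp]
  rw [e2, ← ee_add, ← ee_add]
  congr 2
  field_simp
  ring

noncomputable def KK (p q τ : ℂ) : ℂ := KN p q τ / dedekindEta τ ^ 3

lemma KK_T (p q τ : ℂ) : KK p q (τ + 1) = KK p (p + q) τ := by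
  unfold KK
  rw [KN_T, eta_T, mul_div_mul_left _ _ (ee_ne _)]

lemma KK_S (p q : ℂ) {τ : ℂ} (hτ : 0 < τ.im) : τ * KK p q (-1 / τ) = KK q (-p) τ := by
  have h0 : τ ≠ 0 := by rintro rfl; simp at hτ
  have hA : (-I * τ) ^ (1 / 2 : ℂ) ≠ 0 := by
    rw [Ne, Complex.cpow_eq_zero_iff]
    simp [h0]
  have := eta_ne hτ
  unfold KK
  rw [KN_S p q hτ, ← eta_S hτ]
  generalize (-I * τ) ^ (1 / 2 : ℂ) = A at *
  have := I_ne_zero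
  field_simp

abbrev SLZ := Matrix.SpecialLinearGroup (Fin 2) ℤ

noncomputable def dn (g : SLZ) (τ : ℂ) : ℂ := (g 1 0 : ℂ) * τ + (g 1 1 : ℂ)

lemma sl_coe (g : SLZ) (τ : UpperHalfPlane) :
    ((g • τ : UpperHalfPlane) : ℂ) = ((g 0 0 : ℂ) * τ + (g 0 1 : ℂ)) / dn g τ := by
  rw [UpperHalfPlane.specialLinearGroup_apply]
  simp [dn]

lemma dn_ne (g : SLZ) (τ : UpperHalfPlane) : dn g τ ≠ 0 := by
  have := UpperHalfPlane.denom_ne_zero g τ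
  rwa [ModularGroup.denom_apply] at this

lemma dn_mul (g h : SLZ) (τ : UpperHalfPlane) : dn (g * h) τ = dn g (h • τ :) * dn h τ := by
  have h0 := dn_ne h τ
  rw [dn, dn, sl_coe]
  rw [add_mul, mul_assoc, div_mul_cancel₀ _ h0]
  simp [Matrix.mul_apply, Fin.sum_univ_two, dn]
  ring

lemma KK_SL (g : SLZ) : ∀ (τ : UpperHalfPlane) (p q : ℂ),
    dn g τ * KK p q (g • τ : UpperHalfPlane) =
      KK (p * g 0 0 + q * g 1 0) (p * g 0 1 + q * g 1 1) τ := by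
  have hg : g ∈ Subgroup.closure {ModularGroup.S, ModularGroup.T} := by
    rw [SpecialLinearGroup.SL2Z_generators]; trivial
  induction hg using Subgroup.closure_induction with
  | mem x hx =>
    intro τ p q
    rcases hx with rfl | rfl
    · have := KK_S p q τ.2
      rw [sl_coe]
      simp only [dn, ModularGroup.coe_S] 
      simpa using this
    · have := KK_T p q τ
      rw [sl_coe]
      simp only [dn, ModularGroup.coe_T] 
      simpa using this
  | one => intro τ p q; simp [dn]
  | mul x y hx hy ihx ihy =>
    intro τ p q
    rw [dn_mul, mul_smul, mul_comm (dn x _), mul_assoc, ihx, ihy]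
    simp [Matrix.mul_apply, Fin.sum_univ_two]
    congr 1 <;> ring
  | inv x hx ih =>
    intro τ p q
    have h1 := dn_mul x x⁻¹ τ
    rw [mul_inv_cancel] at h1
    have h2 : dn 1 (τ : ℂ) = 1 := by simp [dn]
    rw [h2] at h1
    have hd : (x 0 0 : ℂ) * x 1 1 - x 0 1 * x 1 0 = 1 := by
      have := x.det_coe
      rw [Matrix.det_fin_two] at this
      exact_mod_cast this
    have h3 := ih (x⁻¹ • τ) (p * (x⁻¹ : SLZ) 0 0 + q * (x⁻¹ : SLZ) 1 0) (p * (x⁻¹ : SLZ) 0 1 + q * (x⁻¹ : SLZ) 1 1)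
    rw [smul_inv_smul] at h3
    have e1 : (p * ((x⁻¹ : SLZ) 0 0 : ℂ) + q * ((x⁻¹ : SLZ) 1 0 : ℂ)) * x 0 0 + (p * ((x⁻¹ : SLZ) 0 1 : ℂ) + q * ((x⁻¹ : SLZ) 1 1 : ℂ)) * x 1 0 = p := by
      simp [Matrix.SpecialLinearGroup.coe_inv, Matrix.adjugate_fin_two]
      linear_combination p * hd
    have e2 : (p * ((x⁻¹ : SLZ) 0 0 : ℂ) + q * ((x⁻¹ : SLZ) 1 0 : ℂ)) * x 0 1 + (p * ((x⁻¹ : SLZ) 0 1 : ℂ) + q * ((x⁻¹ : SLZ) 1 1 : ℂ)) * x 1 1 = q := by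
      simp [Matrix.SpecialLinearGroup.coe_inv, Matrix.adjugate_fin_two]
      linear_combination q * hd
    rw [e1, e2] at h3
    rw [← h3, ← mul_assoc, mul_comm (dn x⁻¹ _), ← h1, one_mul]

lemma KN_half (τ : ℂ) : KN (1 / 2) 0 τ = -I * Th4 τ := by
  rw [KN_eq, Th4_eq2]
  rw [show (1 / 2 + 1 / 2 : ℂ) * τ + (0 + 1 / 2) = 1 / 2 + τ by ring, jacobiTheta₂_add_left', ← mul_assoc]
  congr 1
  rw [show Complex.exp (-(Real.pi : ℂ) * I * (τ + 2 * (1 / 2))) = ee (-(τ + 1)) by unfold ee; ring_nf,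
    ← ee_add, show (-I : ℂ) = ee (-(1 / 2)) by rw [ee_neg, ee_half]; simp]
  congr 1; ring

lemma KN_add_right (p q τ : ℂ) : KN p (q + 2) τ = ee (2 * p) * KN p q τ := by
  rw [KN_eq, KN_eq, show (p + 1 / 2) * τ + (q + 2 + 1 / 2) = (p + 1 / 2) * τ + (q + 1 / 2) + 1 + 1 by ring,
    jacobiTheta₂_add_left, jacobiTheta₂_add_left, ← mul_assoc, ← ee_add]
  congr 1
  exact ee_congr 1 (by push_cast; ring)

lemma KN_add_left (p q τ : ℂ) : KN (p + 2) q τ = ee (-2 * q) * KN p q τ := by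
  rw [KN_eq, KN_eq, show (p + 2 + 1 / 2) * τ + (q + 1 / 2) = (p + 1 / 2) * τ + (q + 1 / 2) + τ + τ by ring,
    jacobiTheta₂_add_left', jacobiTheta₂_add_left']
  have e : ∀ x : ℂ, Complex.exp (-(Real.pi : ℂ) * I * x) = ee (-x) := by intro x; unfold ee; ring_nf
  rw [e, e, ← mul_assoc, ← mul_assoc, ← mul_assoc, ← ee_add, ← ee_add, ← ee_add]
  congr 1
  exact ee_congr (-1) (by push_cast; ring)

lemma KN_shift (k β : ℤ) (τ : ℂ) :
    KN (1 / 2 + 2 * k) (2 * β) τ = ee β * KN (1 / 2) 0 τ := by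
  have h1 : Function.Periodic (fun p => KN p (2 * β) τ) 2 := by
    intro p
    simp only
    rw [KN_add_left, show (-2 * (2 * (β : ℂ))) = 2 * ((-2 * β : ℤ) : ℂ) by push_cast; ring, ee_two_int, one_mul]
  have h2 : Function.Periodic (fun q => ee (-q / 2) * KN (1 / 2) q τ) 2 := by
    intro q
    simp only
    rw [KN_add_right, ← mul_assoc, ← ee_add]
    congr 2; ring
  have h3 := h1.int_mul k (1 / 2)
  have h4 := h2.int_mul β 0
  rw [mul_comm (2 : ℂ) (k : ℂ), h3]
  rw [zero_add, mul_comm (β : ℂ) 2] at h4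
  rw [show -(0 : ℂ) / 2 = 0 by simp, ee_zero, one_mul] at h4
  rw [← h4, ← mul_assoc, ← ee_add, show (β : ℂ) + -(2 * β) / 2 = 0 by ring, ee_zero, one_mul]

lemma KK_gamma (a b c d : ℤ) (hdet : a * d - b * c = 1) (k β : ℤ) (hk : a = 1 + 4 * k) (hβ : b = 4 * β)
    (τ : ℂ) (hτ : 0 < τ.im) :
    ((c : ℂ) * τ + d) * (Th4 (((a : ℂ) * τ + b) / ((c : ℂ) * τ + d)) /
      dedekindEta (((a : ℂ) * τ + b) / ((c : ℂ) * τ + d)) ^ 3) =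
    ee β * (Th4 τ / dedekindEta τ ^ 3) := by
  let g : SLZ := ⟨!![a, b; c, d], by rw [Matrix.det_fin_two_of]; exact hdet⟩
  have h := KK_SL g ⟨τ, hτ⟩ (1 / 2) 0
  rw [sl_coe] at h
  simp only [dn, g] at h
  simp at h
  unfold KK at h
  have e1 : (2⁻¹ : ℂ) * a = 1 / 2 + 2 * k := by rw [hk]; push_cast; ring
  have e2 : (2⁻¹ : ℂ) * b = 2 * β := by rw [hβ]; push_cast; ring
  rw [e1, e2, KN_shift, show (2⁻¹ : ℂ) = 1 / 2 by norm_num, KN_half, KN_half] at h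
  have hI := I_ne_zero
  apply mul_left_cancel₀ (neg_ne_zero.2 hI)
  linear_combination h

noncomputable def GG (τ : ℂ) (p q : ℝ) : ℂ :=
  ee (p * q) * (Real.exp (-(Real.pi * normSq (p * τ + q) / (2 * τ.im))) : ℝ) / (p * τ + q)

noncomputable def LL (τ : ℂ) : ℂ := ∑' z : ℤ × ℤ, GG τ ((z.1 : ℝ) + 1 / 4) ((z.2 : ℝ) + 1 / 2)

def gEquiv (a b c d k β κ δ : ℤ) (hdet : a * d - b * c = 1) (hk : a = 1 + 4 * k) (hβ : b = 4 * β)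
    (hκ : c = 2 * κ) (hδ : d = 1 + 4 * δ) : ℤ × ℤ ≃ ℤ × ℤ where
  toFun z := (a * z.1 + c * z.2 + k + κ, b * z.1 + d * z.2 + β + 2 * δ)
  invFun z := (d * z.1 - c * z.2 + δ - κ, -b * z.1 + a * z.2 - β + 2 * k)
  left_inv := by
    intro z
    subst hk hβ hκ hδ
    have h4 : k + δ + 4 * k * δ - 2 * β * κ = 0 := by
      have : 4 * (k + δ + 4 * k * δ - 2 * β * κ) = 0 := by linear_combination hdet
      omega
    ext
    · simp only; linear_combination z.1 * hdet + h4
    · simp only; linear_combination z.2 * hdet + 2 * h4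
  right_inv := by
    intro z
    subst hk hβ hκ hδ
    have h4 : k + δ + 4 * k * δ - 2 * β * κ = 0 := by
      have : 4 * (k + δ + 4 * k * δ - 2 * β * κ) = 0 := by linear_combination hdet
      omega
    ext
    · simp only; linear_combination z.1 * hdet + h4
    · simp only; linear_combination z.2 * hdet + 2 * h4

lemma mob_im (a b c d : ℤ) (hdet : a * d - b * c = 1) (τ : ℂ) :
    (((a : ℂ) * τ + b) / ((c : ℂ) * τ + d)).im = τ.im / normSq ((c : ℂ) * τ + d) := by
  have hd : (a : ℝ) * d - b * c = 1 := by exact_mod_cast hdet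
  rw [Complex.div_im]
  simp
  rw [← sub_div]
  congr 1
  linear_combination τ.im * hd

lemma cd_ne (a b c d : ℤ) (hdet : a * d - b * c = 1) (τ : ℂ) (hτ : 0 < τ.im) : (c : ℂ) * τ + d ≠ 0 := by
  intro h
  have him : (c : ℝ) * τ.im = 0 := by simpa using congrArg Complex.im h
  have hc : c = 0 := by
    rcases mul_eq_zero.1 him with h | h
    · exact_mod_cast h
    · linarith
  subst hc
  simp at h
  subst h
  simp at hdet

lemma GG_gamma (a b c d : ℤ) (hdet : a * d - b * c = 1) (τ : ℂ) (hτ : 0 < τ.im) (p q p' q' : ℝ)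
    (hp : p' = p * a + q * c) (hq : q' = p * b + q * d) (e : ℂ) (n : ℤ)
    (he : (p : ℂ) * q = p' * q' + e + 2 * n) :
    GG (((a : ℂ) * τ + b) / ((c : ℂ) * τ + d)) p q = ((c : ℂ) * τ + d) * ee e * GG τ p' q' := by
  have h0 := cd_ne a b c d hdet τ hτ
  have hz : (p : ℂ) * (((a : ℂ) * τ + b) / ((c : ℂ) * τ + d)) + q = (p' * τ + q') / ((c : ℂ) * τ + d) := by
    rw [hp, hq, eq_div_iff h0, add_mul, mul_assoc, div_mul_cancel₀ _ h0]; push_cast; ring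
  unfold GG
  rw [hz, mob_im a b c d hdet τ, ee_congr n he, ee_add, map_div₀]
  have hn : normSq ((c : ℂ) * τ + d) ≠ 0 := by rwa [Ne, normSq_eq_zero]
  rw [show Real.pi * (normSq (↑p' * τ + ↑q') / normSq (↑c * τ + ↑d)) / (2 * (τ.im / normSq (↑c * τ + ↑d)))
    = Real.pi * normSq (↑p' * τ + ↑q') / (2 * τ.im) by generalize normSq (↑c * τ + ↑d) = B at hn; field_simp]
  rw [show ∀ x y z w : ℂ, x * y / (z / w) = w * (x * y / z) by intro x y z w; rw [div_div_eq_mul_div]; ring]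
  ring

lemma LL_gamma (a b c d k β κ δ : ℤ) (hdet : a * d - b * c = 1) (hk : a = 1 + 4 * k) (hβ : b = 4 * β)
    (hκ : c = 2 * κ) (hδ : d = 1 + 4 * δ) (τ : ℂ) (hτ : 0 < τ.im) :
    LL (((a : ℂ) * τ + b) / ((c : ℂ) * τ + d)) =
      ((c : ℂ) * τ + d) * ee (-((a : ℂ) * b / 16 + c * d / 4)) * LL τ := by
  unfold LL
  rw [← (gEquiv a b c d k β κ δ hdet hk hβ hκ hδ).tsum_eq (fun z => GG τ ((z.1 : ℝ) + 1 / 4) ((z.2 : ℝ) + 1 / 2)),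
    ← tsum_mul_left]
  refine tsum_congr fun z => ?_
  have hdet' : (a : ℂ) * d - b * c = 1 := by exact_mod_cast hdet
  have hk' : (a : ℂ) = 1 + 4 * k := by exact_mod_cast hk
  have hβ' : (b : ℂ) = 4 * β := by exact_mod_cast hβ
  have hκ' : (c : ℂ) = 2 * κ := by exact_mod_cast hκ
  have hδ' : (d : ℂ) = 1 + 4 * δ := by exact_mod_cast hδ
  refine GG_gamma a b c d hdet τ hτ _ _ _ _ ?_ ?_ _ 
    (-(2 * a * β * z.1 ^ 2 + a * β * z.1 + β * κ * (4 * z.1 + 1) * (2 * z.2 + 1) + κ * d * (z.2 ^ 2 + z.2))) ?_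
  · simp only [gEquiv, Equiv.coe_fn_mk]
    have hk'' : (a : ℝ) = 1 + 4 * k := by exact_mod_cast hk
    have hκ'' : (c : ℝ) = 2 * κ := by exact_mod_cast hκ
    push_cast
    linear_combination -(1 / 4 : ℝ) * hk'' - (1 / 2 : ℝ) * hκ''
  · simp only [gEquiv, Equiv.coe_fn_mk]
    have hβ'' : (b : ℝ) = 4 * β := by exact_mod_cast hβ
    have hδ'' : (d : ℝ) = 1 + 4 * δ := by exact_mod_cast hδ
    push_cast
    linear_combination -(1 / 4 : ℝ) * hβ'' - (1 / 2 : ℝ) * hδ''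
  · simp only [gEquiv, Equiv.coe_fn_mk]
    push_cast
    have h1 : (a * z.1 + c * z.2 + k + κ + 1 / 4 : ℂ) = (z.1 + 1 / 4) * a + (z.2 + 1 / 2) * c := by
      linear_combination -(1 / 4 : ℂ) * hk' - (1 / 2 : ℂ) * hκ'
    have h2 : (b * z.1 + d * z.2 + β + 2 * δ + 1 / 2 : ℂ) = (z.1 + 1 / 4) * b + (z.2 + 1 / 2) * d := by
      linear_combination -(1 / 4 : ℂ) * hβ' - (1 / 2 : ℂ) * hδ'
    rw [h1, h2]
    have h3 : ((z.1 + 1 / 4 : ℂ) * a + (z.2 + 1 / 2) * c) * ((z.1 + 1 / 4) * b + (z.2 + 1 / 2) * d)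
      = a * b * (z.1 + 1 / 4) ^ 2 + 2 * (b * c) * (z.1 + 1 / 4) * (z.2 + 1 / 2) + c * d * (z.2 + 1 / 2) ^ 2 + (z.1 + 1 / 4) * (z.2 + 1 / 2) := by
      linear_combination (z.1 + 1 / 4 : ℂ) * (z.2 + 1 / 2) * hdet'
    rw [h3, hβ', hκ']
    ring

noncomputable def Er (y x : ℝ) : ℝ := 2 * ∫ t in (0:ℝ)..(x * Real.sqrt (2 * y)), Real.exp (-Real.pi * t ^ 2)

lemma gauss_int : MeasureTheory.Integrable (fun t : ℝ => Real.exp (-Real.pi * t ^ 2)) :=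
  integrable_exp_neg_mul_sq Real.pi_pos

lemma gauss_cont : Continuous (fun t : ℝ => Real.exp (-Real.pi * t ^ 2)) := by fun_prop

lemma Er_deriv (y x : ℝ) (hy : 0 < y) :
    HasDerivAt (Er y) (2 * Real.sqrt (2 * y) * Real.exp (-(2 * Real.pi * y) * x ^ 2)) x := by
  have h1 : HasDerivAt (fun X : ℝ => ∫ t in (0:ℝ)..X, Real.exp (-Real.pi * t ^ 2))
      (Real.exp (-Real.pi * (x * Real.sqrt (2 * y)) ^ 2)) (x * Real.sqrt (2 * y)) :=
    intervalIntegral.integral_hasDerivAt_right (gauss_cont.intervalIntegrable _ _)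
      (gauss_cont.stronglyMeasurableAtFilter _ _) gauss_cont.continuousAt
  have h2 : HasDerivAt (fun x : ℝ => x * Real.sqrt (2 * y)) (Real.sqrt (2 * y)) x := by
    simpa using (hasDerivAt_id x).mul_const (Real.sqrt (2 * y))
  have h3 := (h1.comp x h2).const_mul 2
  refine h3.congr_deriv ?_
  rw [mul_pow, Real.sq_sqrt (by positivity)]
  ring_nf

lemma Er_cont (y : ℝ) (hy : 0 < y) : Continuous (Er y) :=
  continuous_iff_continuousAt.2 fun x => (Er_deriv y x hy).continuousAt

lemma Er_neg (y x : ℝ) : Er y (-x) = -Er y x := by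
  unfold Er
  have := intervalIntegral.integral_comp_neg (a := 0) (b := x * Real.sqrt (2 * y))
    (fun t : ℝ => Real.exp (-Real.pi * t ^ 2))
  simp only [neg_sq, neg_zero] at this
  rw [this, intervalIntegral.integral_symm, neg_mul]; ring

lemma Er_one_sub (y x : ℝ) : 1 - Er y x =
    2 * ∫ t in Set.Ioi (x * Real.sqrt (2 * y)), Real.exp (-Real.pi * t ^ 2) := by
  have h := intervalIntegral.integral_Ioi_sub_Ioi' (μ := MeasureTheory.volume) (f := fun t : ℝ => Real.exp (-Real.pi * t ^ 2))
    (a := 0) (b := x * Real.sqrt (2 * y)) gauss_int.integrableOn gauss_int.integrableOn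
  have h2 : ∫ t in Set.Ioi (0:ℝ), Real.exp (-Real.pi * t ^ 2) = 1 / 2 := by
    rw [integral_gaussian_Ioi, div_self Real.pi_ne_zero]; simp
  unfold Er
  rw [← h, h2]; ring

lemma Er_le_one (y x : ℝ) : Er y x ≤ 1 := by
  have := Er_one_sub y x
  have h : 0 ≤ ∫ t in Set.Ioi (x * Real.sqrt (2 * y)), Real.exp (-Real.pi * t ^ 2) :=
    MeasureTheory.setIntegral_nonneg measurableSet_Ioi fun t _ => (Real.exp_pos _).le
  linarith

lemma Er_ge (y x : ℝ) : -1 ≤ Er y x := by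
  have := Er_le_one y (-x)
  rw [Er_neg] at this; linarith

lemma Er_tail (y x : ℝ) (hy : 0 < y) (hx : 0 ≤ x) :
    1 - Er y x ≤ Real.exp (-(2 * Real.pi * y) * x ^ 2) := by
  rw [Er_one_sub]
  set X := x * Real.sqrt (2 * y) with hX
  have hX0 : 0 ≤ X := by positivity
  have hXX : X ^ 2 = 2 * y * x ^ 2 := by
    rw [hX, mul_pow, Real.sq_sqrt (by positivity)]; ring
  have h1 : ∫ t in Set.Ioi X, Real.exp (-Real.pi * t ^ 2) =
      ∫ t in Set.Ioi (0:ℝ), Real.exp (-Real.pi * (t + X) ^ 2) := by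
    have := (MeasureTheory.measurePreserving_add_right MeasureTheory.volume X).setIntegral_preimage_emb
      (measurableEmbedding_addRight X) (fun t : ℝ => Real.exp (-Real.pi * t ^ 2)) (Set.Ioi X)
    rw [Set.preimage_add_const_Ioi, sub_self] at this
    exact this.symm
  have h2 : ∫ t in Set.Ioi (0:ℝ), Real.exp (-Real.pi * t ^ 2) = 1 / 2 := by
    rw [integral_gaussian_Ioi, div_self Real.pi_ne_zero]; simp
  have h3 : ∫ t in Set.Ioi (0:ℝ), Real.exp (-Real.pi * (t + X) ^ 2) ≤
      ∫ t in Set.Ioi (0:ℝ), Real.exp (-Real.pi * X ^ 2) * Real.exp (-Real.pi * t ^ 2) := by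
    refine MeasureTheory.setIntegral_mono_on ?_ ?_ measurableSet_Ioi ?_
    · exact (gauss_int.comp_add_right X).integrableOn
    · exact (gauss_int.const_mul _).integrableOn
    · intro t ht
      rw [← Real.exp_add]
      apply Real.exp_le_exp.2
      have ht : 0 < t := ht
      have : 0 ≤ Real.pi * (t * X) := by positivity
      nlinarith
  rw [MeasureTheory.integral_const_mul, h2] at h3
  rw [h1, show -(2 * Real.pi * y) * x ^ 2 = -Real.pi * X ^ 2 by rw [hXX]; ring]
  linarith

lemma Er_sgn (y x : ℝ) (hy : 0 < y) (hx : x ≠ 0) :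
    |Real.sign x - Er y x| ≤ Real.exp (-(2 * Real.pi * y) * x ^ 2) := by
  rcases lt_or_gt_of_ne hx with h | h
  · rw [Real.sign_of_neg h]
    have := Er_tail y (-x) hy (by linarith)
    rw [Er_neg, neg_sq] at this
    have h2 := Er_ge y x
    rw [abs_le]; constructor <;> nlinarith [Real.exp_pos (-(2 * Real.pi * y) * x ^ 2)]
  · rw [Real.sign_of_pos h]
    have := Er_tail y x hy h.le
    have h2 := Er_le_one y x
    rw [abs_le]; constructor <;> nlinarith [Real.exp_pos (-(2 * Real.pi * y) * x ^ 2)]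

lemma Er_exp (y x l : ℝ) (hy : 0 < y) (hl : 0 < l) :
    1 + Er y x ≤ 2 * Real.exp (l ^ 2 / (8 * Real.pi * y)) * Real.exp (l * x) := by
  have hpy : 0 < Real.pi * y := by positivity
  rcases le_or_gt 0 x with h | h
  · have h1 := Er_le_one y x
    have h2 : 1 ≤ Real.exp (l ^ 2 / (8 * Real.pi * y)) := Real.one_le_exp (by positivity)
    have h3 : 1 ≤ Real.exp (l * x) := Real.one_le_exp (by positivity)
    nlinarith
  · have := Er_tail y (-x) hy (by linarith)
    rw [Er_neg, neg_sq] at this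
    have h2 : Real.exp (-(2 * Real.pi * y) * x ^ 2) ≤ Real.exp (l ^ 2 / (8 * Real.pi * y)) * Real.exp (l * x) := by
      rw [← Real.exp_add]
      apply Real.exp_le_exp.2
      have : l ^ 2 / (8 * Real.pi * y) + l * x - -(2 * Real.pi * y) * x ^ 2 = (l + 4 * (Real.pi * y) * x) ^ 2 / (8 * Real.pi * y) := by
        field_simp; ring
      have h5 : 0 ≤ (l + 4 * (Real.pi * y) * x) ^ 2 / (8 * Real.pi * y) := by positivity
      linarith
    have h4 : 0 < Real.exp (-(2 * Real.pi * y) * x ^ 2) := Real.exp_pos _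
    nlinarith

noncomputable def hh (y c : ℝ) (w : ℂ) (x : ℝ) : ℂ := ee (2 * x * w) * ((1 + Er y (x - c) : ℝ) : ℂ)

lemma exp_abs_le (a x : ℝ) (ha : 0 < a) :
    Real.exp (-(a * |x|)) ≤ (1 + 2 / a ^ 2) * (1 + x ^ 2)⁻¹ := by
  have h := Real.quadratic_le_exp_of_nonneg (x := a * |x|) (by positivity)
  rw [Real.exp_neg, ← div_eq_mul_inv, le_div_iff₀ (by positivity), inv_mul_le_iff₀ (Real.exp_pos _)]
  have h1 : 0 ≤ a * |x| := by positivity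
  have h2 : (a * |x|) ^ 2 = a ^ 2 * x ^ 2 := by rw [mul_pow, sq_abs]
  have h3 : 1 + x ^ 2 ≤ (1 + 2 / a ^ 2) * (1 + a ^ 2 * x ^ 2 / 2) := by
    have : (1 + 2 / a ^ 2) * (1 + a ^ 2 * x ^ 2 / 2) = 1 + x ^ 2 + 2 / a ^ 2 + a ^ 2 * x ^ 2 / 2 := by
      field_simp; ring
    rw [this]
    have : 0 ≤ 2 / a ^ 2 + a ^ 2 * x ^ 2 / 2 := by positivity
    linarith
  have h4 : 0 < 1 + 2 / a ^ 2 := by positivity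
  nlinarith

lemma hh_bound (y c : ℝ) (w : ℂ) (hy : 0 < y) (hw : 0 < w.im) :
    ∃ C, ∀ x, ‖hh y c w x‖ ≤ C * (1 + x ^ 2)⁻¹ := by
  set a := 2 * Real.pi * w.im with ha
  have ha0 : 0 < a := by positivity
  set K := 2 * Real.exp ((2 * a) ^ 2 / (8 * Real.pi * y)) * Real.exp (-(2 * a * c)) with hK
  have hK0 : 0 < K := by positivity
  refine ⟨(2 + K) * (1 + 2 / a ^ 2), fun x => ?_⟩
  have h1 : ‖hh y c w x‖ = Real.exp (-(a * x)) * (1 + Er y (x - c)) := by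
    unfold hh
    rw [norm_mul, norm_ee, Complex.norm_real, Real.norm_of_nonneg (by linarith [Er_ge y (x - c)])]
    congr 2
    simp [ha]; ring
  have h2 := exp_abs_le a x ha0
  rw [mul_assoc]
  refine le_trans ?_ (mul_le_mul_of_nonneg_left h2 (by positivity))
  rw [h1]
  rcases le_or_gt 0 x with h | h
  · rw [abs_of_nonneg h, mul_comm]
    refine mul_le_mul_of_nonneg_right ?_ (Real.exp_pos _).le
    linarith [Er_le_one y (x - c)]
  · rw [abs_of_neg h]
    have h3 := Er_exp y (x - c) (2 * a) hy (by positivity)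
    have h4 : Real.exp (2 * a * (x - c)) = Real.exp (-(2 * a * c)) * Real.exp (2 * a * x) := by
      rw [← Real.exp_add]; ring_nf
    rw [h4, ← mul_assoc, ← hK] at h3
    calc Real.exp (-(a * x)) * (1 + Er y (x - c)) ≤ Real.exp (-(a * x)) * (K * Real.exp (2 * a * x)) :=
          mul_le_mul_of_nonneg_left h3 (Real.exp_pos _).le
      _ = K * Real.exp (-(a * -x)) := by
          rw [mul_left_comm, ← Real.exp_add]; ring_nf
      _ ≤ (2 + K) * Real.exp (-(a * -x)) :=
          mul_le_mul_of_nonneg_right (by linarith) (Real.exp_pos _).le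

lemma hh_cont (y c : ℝ) (w : ℂ) (hy : 0 < y) : Continuous (hh y c w) := by
  have := Er_cont y hy
  unfold hh ee
  fun_prop

lemma hh_integrable (y c : ℝ) (w : ℂ) (hy : 0 < y) (hw : 0 < w.im) :
    MeasureTheory.Integrable (hh y c w) := by
  obtain ⟨C, hC⟩ := hh_bound y c w hy hw
  exact (integrable_inv_one_add_sq.const_mul C).mono' (hh_cont y c w hy).aestronglyMeasurable
    (Filter.Eventually.of_forall hC)

noncomputable def PG (y c : ℝ) (z : ℂ) : ℂ :=
  I / Real.pi * (Complex.exp (2 * Real.pi * I * c * z - Real.pi * z ^ 2 / (2 * y)) / z)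

lemma quad_int (y c : ℝ) (z : ℂ) (hy : 0 < y) :
    ∫ x : ℝ, ee (2 * x * z) * ((2 * Real.sqrt (2 * y) * Real.exp (-(2 * Real.pi * y) * (x - c) ^ 2) : ℝ) : ℂ)
      = 2 * Complex.exp (2 * Real.pi * I * c * z - Real.pi * z ^ 2 / (2 * y)) := by
  have hpy : (0:ℝ) < 2 * Real.pi * y := by positivity
  have hpi : (Real.pi : ℂ) ≠ 0 := by exact_mod_cast Real.pi_ne_zero
  have hyC : (y : ℂ) ≠ 0 := by exact_mod_cast hy.ne'
  have h := integral_cexp_quadratic (b := ((-(2 * Real.pi * y) : ℝ) : ℂ)) (by rw [ofReal_re]; linarith)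
    (4 * Real.pi * y * c + 2 * Real.pi * I * z) (-(2 * Real.pi * y) * c ^ 2)
  have h1 : ∀ x : ℝ, ee (2 * x * z) * ((2 * Real.sqrt (2 * y) * Real.exp (-(2 * Real.pi * y) * (x - c) ^ 2) : ℝ) : ℂ)
    = (2 * Real.sqrt (2 * y) : ℝ) * Complex.exp (((-(2 * Real.pi * y) : ℝ) : ℂ) * x ^ 2 + (4 * Real.pi * y * c + 2 * Real.pi * I * z) * x + (-(2 * Real.pi * y) * c ^ 2)) := by
    intro x
    unfold ee
    rw [ofReal_mul, ofReal_exp, mul_left_comm, ← Complex.exp_add]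
    congr 2
    push_cast
    ring
  simp_rw [h1]
  rw [MeasureTheory.integral_const_mul, h]
  have h2 : ((Real.pi : ℂ) / -((-(2 * Real.pi * y) : ℝ) : ℂ)) ^ (1 / 2 : ℂ) = ((1 / Real.sqrt (2 * y) : ℝ) : ℂ) := by
    have : (Real.pi : ℂ) / -((-(2 * Real.pi * y) : ℝ) : ℂ) = ((1 / (2 * y) : ℝ) : ℂ) := by
      push_cast; field_simp
    rw [this, show (1 / 2 : ℂ) = ((1 / 2 : ℝ) : ℂ) by push_cast; rfl, ← ofReal_cpow (by positivity), ← Real.sqrt_eq_rpow]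
    congr 1
    rw [Real.sqrt_div zero_le_one, Real.sqrt_one]
  rw [h2, ← mul_assoc, ← ofReal_mul]
  have h3 : 2 * Real.sqrt (2 * y) * (1 / Real.sqrt (2 * y)) = 2 := by
    have : Real.sqrt (2 * y) ≠ 0 := (Real.sqrt_pos.2 (by positivity)).ne'
    field_simp
  rw [h3]
  push_cast
  congr 2
  field_simp
  ring_nf
  simp only [I_sq]
  ring

lemma hh_int (y c : ℝ) (z : ℂ) (hy : 0 < y) (hz : 0 < z.im) :
    ∫ x : ℝ, hh y c z x = PG y c z := by
  have hz0 : z ≠ 0 := by rintro rfl; simp at hz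
  have hpi : (Real.pi : ℂ) ≠ 0 := by exact_mod_cast Real.pi_ne_zero
  have hz1 : 2 * (Real.pi : ℂ) * I * z ≠ 0 := by
    simp [hz0, Real.pi_ne_zero]
  have hu : ∀ x : ℝ, HasDerivAt (fun x : ℝ => ((1 + Er y (x - c) : ℝ) : ℂ))
      ((2 * Real.sqrt (2 * y) * Real.exp (-(2 * Real.pi * y) * (x - c) ^ 2) : ℝ) : ℂ) x := by
    intro x
    have h1 := ((Er_deriv y (x - c) hy).comp_sub_const x c).const_add 1
    exact h1.ofReal_comp
  have hv : ∀ x : ℝ, HasDerivAt (fun x : ℝ => ee (2 * x * z) / (2 * Real.pi * I * z)) (ee (2 * x * z)) x := by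
    intro x
    have h1 : HasDerivAt (fun t : ℂ => Complex.exp (2 * Real.pi * I * z * t)) (Complex.exp (2 * Real.pi * I * z * x) * (2 * Real.pi * I * z)) (x : ℂ) := by
      simpa using ((hasDerivAt_id (x : ℂ)).const_mul (2 * Real.pi * I * z)).cexp
    have h2 := h1.comp_ofReal.div_const (2 * Real.pi * I * z)
    rw [mul_div_cancel_right₀ _ hz1] at h2
    have e : ∀ t : ℝ, ee (2 * t * z) = Complex.exp (2 * Real.pi * I * z * t) := by
      intro t; unfold ee; ring_nf
    simp_rw [e]; exact h2
  have hI := hh_integrable y c z hy hz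
  have key := MeasureTheory.integral_mul_deriv_eq_deriv_mul_of_integrable (fun x _ => hu x) (fun x _ => hv x)
    (by convert hI using 1; ext x; simp only [Pi.mul_apply, hh]; ring)
    (by
      have := quad_int y c z hy
      by_contra hni
      have h0 : ∫ x : ℝ, ee (2 * x * z) * ((2 * Real.sqrt (2 * y) * Real.exp (-(2 * Real.pi * y) * (x - c) ^ 2) : ℝ) : ℂ) = 0 := by
        apply MeasureTheory.integral_undef
        intro h
        apply hni
        convert h.div_const (2 * Real.pi * I * z) using 1
        ext x; simp only [Pi.mul_apply]; ring
      rw [h0] at this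
      exact mul_ne_zero two_ne_zero (Complex.exp_ne_zero _) this.symm)
    (by convert hI.div_const (2 * Real.pi * I * z) using 1; ext x; simp only [Pi.mul_apply, hh]; ring)
  have e1 : ∀ x : ℝ, hh y c z x = ((1 + Er y (x - c) : ℝ) : ℂ) * ee (2 * x * z) := fun x => by unfold hh; ring
  have e2 : ∀ x : ℝ, ((2 * Real.sqrt (2 * y) * Real.exp (-(2 * Real.pi * y) * (x - c) ^ 2) : ℝ) : ℂ) * (ee (2 * x * z) / (2 * Real.pi * I * z))
     = (1 / (2 * Real.pi * I * z)) * (ee (2 * x * z) * ((2 * Real.sqrt (2 * y) * Real.exp (-(2 * Real.pi * y) * (x - c) ^ 2) : ℝ) : ℂ)) := fun x => by ring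
  simp_rw [e1]
  rw [key]
  simp_rw [e2]
  rw [MeasureTheory.integral_const_mul, quad_int y c z hy]
  unfold PG
  field_simp
  rw [I_sq]

lemma PG_summable (y c : ℝ) (w : ℂ) (hy : 0 < y) (hw : w.im ≠ 0) :
    Summable fun n : ℤ => PG y c (w + n) := by
  have hyC : (y : ℂ) ≠ 0 := by exact_mod_cast hy.ne'
  have hτ : 0 < (I / (2 * y)).im := by
    rw [show I / (2 * (y : ℂ)) = ((1 / (2 * y) : ℝ) : ℂ) * I by push_cast; ring]
    simp; exact hy
  have h := (summable_term (c + I * w / (2 * y)) hτ).norm.mul_left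
    (‖I / Real.pi * Complex.exp (2 * Real.pi * I * c * w - Real.pi * w ^ 2 / (2 * y))‖ * |w.im|⁻¹)
  refine Summable.of_norm_bounded h fun n => ?_
  have h1 : PG y c (w + n) = I / Real.pi * Complex.exp (2 * Real.pi * I * c * w - Real.pi * w ^ 2 / (2 * y))
     * (w + n)⁻¹ * ee (2 * n * (c + I * w / (2 * y)) + n ^ 2 * (I / (2 * y))) := by
    unfold PG ee
    rw [div_eq_mul_inv (Complex.exp _),
      show 2 * (Real.pi : ℂ) * I * c * (w + n) - Real.pi * (w + n) ^ 2 / (2 * y) =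
      (2 * Real.pi * I * c * w - Real.pi * w ^ 2 / (2 * y)) +
       Real.pi * I * (2 * n * (c + I * w / (2 * y)) + n ^ 2 * (I / (2 * y))) by
        linear_combination ((-Real.pi * w * n / y - Real.pi * n ^ 2 / (2 * y) : ℂ)) * I_sq, Complex.exp_add]
    ring
  rw [h1, norm_mul, norm_mul]
  gcongr
  rw [norm_inv]
  refine inv_anti₀ (abs_pos.2 hw) ?_
  have := Complex.abs_im_le_norm (w + n)
  simpa using this

open scoped FourierTransform in
lemma poisson_pos (y c : ℝ) (w : ℂ) (hy : 0 < y) (hw : 0 < w.im) :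
    ∑' k : ℤ, hh y c w (k + 1 / 2) = ∑' n : ℤ, ee n * PG y c (w + n) := by
  have hF : ∀ n : ℤ, 𝓕 (hh y c w) (n : ℝ) = PG y c (w - n) := by
    intro n
    rw [Real.fourier_real_eq_integral_exp_smul, ← hh_int y c (w - n) hy (by simpa using hw)]
    congr 1
    ext x
    unfold hh ee
    rw [smul_eq_mul, ← mul_assoc, ← Complex.exp_add]
    congr 2
    push_cast
    ring
  have hs : Summable fun n : ℤ => 𝓕 (hh y c w) (n : ℝ) := by
    simp_rw [hF]
    have := (Equiv.neg ℤ).summable_iff.2 (PG_summable y c w hy hw.ne')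
    refine this.congr fun n => ?_
    simp [sub_eq_add_neg]
  obtain ⟨C, hC⟩ := hh_bound y c w hy hw
  have hO : (hh y c w) =O[Filter.cocompact ℝ] fun x : ℝ => |x| ^ (-(2 : ℝ)) := by
    refine Asymptotics.IsBigO.of_bound C ?_
    have hne : ∀ᶠ x : ℝ in Filter.cocompact ℝ, x ≠ 0 :=
      (isCompact_singleton (x := (0 : ℝ))).compl_mem_cocompact
    filter_upwards [hne] with x hx
    have hC0 : 0 ≤ C := by
      have := (norm_nonneg _).trans (hC 0)
      simpa using this
    refine (hC x).trans ?_
    refine mul_le_mul_of_nonneg_left ?_ hC0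
    rw [Real.norm_of_nonneg (by positivity), Real.rpow_neg (abs_nonneg x)]
    have hx2 : |x| ^ (2 : ℝ) = x ^ 2 := by
      rw [show (2 : ℝ) = ((2 : ℕ) : ℝ) by norm_num, Real.rpow_natCast, sq_abs]
    rw [hx2]
    exact inv_anti₀ (by positivity) (by linarith)
  have hP := Real.tsum_eq_tsum_fourier_of_rpow_decay_of_summable (hh_cont y c w hy) one_lt_two hO hs (1 / 2)
  simp_rw [add_comm (1 / 2 : ℝ)] at hP
  rw [hP, ← (Equiv.neg ℤ).tsum_eq]
  refine tsum_congr fun n => ?_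
  rw [hF, mul_comm]
  congr 1
  · rw [fourier_coe_apply]
    rw [show ee n = ee (-n) from ee_congr n (by ring)]
    unfold ee
    simp
    ring_nf
  · simp

lemma PG_neg (y c : ℝ) (z : ℂ) : PG y (-c) (-z) = -PG y c z := by
  unfold PG
  rw [div_neg, neg_sq]
  push_cast
  ring_nf

lemma poisson_neg (y c : ℝ) (w : ℂ) (hy : 0 < y) (hw : w.im < 0) :
    ∑' k : ℤ, ee (2 * (k + 1 / 2) * w) * ((-1 + Er y (k + 1 / 2 - c) : ℝ) : ℂ) =
      ∑' n : ℤ, ee n * PG y c (w + n) := by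
  have h := poisson_pos y (-c) (-w) hy (by simpa using hw)
  have e : ∀ n : ℤ, ee n * PG y (-c) (-w + n) = - (ee (-n) * PG y c (w + (-n : ℤ))) := by
    intro n
    rw [show -w + (n : ℂ) = -(w + (-n : ℤ)) by push_cast; ring, PG_neg,
      show ee n = ee (-n) from ee_congr n (by ring)]
    ring
  simp_rw [e] at h
  rw [tsum_neg] at h
  have e2 := (Equiv.neg ℤ).tsum_eq (fun n : ℤ => ee n * PG y c (w + n))
  simp only [Equiv.neg_apply, Int.cast_neg] at e2 h
  rw [← e2, ← neg_eq_iff_eq_neg.2 h, ← tsum_neg]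
  let σ : ℤ ≃ ℤ := (Equiv.neg ℤ).trans (Equiv.addRight (-1))
  rw [← σ.tsum_eq]
  refine tsum_congr fun k => ?_
  have hσ : σ k = -k + -1 := rfl
  rw [hσ]
  unfold hh
  have : Er y ((((-k + -1 : ℤ) : ℝ)) + 1 / 2 - c) = - Er y (k + 1 / 2 - -c) := by
    rw [← Er_neg]; congr 1; push_cast; ring
  rw [this]
  push_cast
  rw [show (2 * (-(k : ℂ) + -1 + 1 / 2) * w) = 2 * (k + 1 / 2) * -w by ring]
  ring

noncomputable def sm (m : ℤ) : ℝ := if 0 ≤ m then 1 else -1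

noncomputable def ww (τ : ℂ) (m : ℤ) : ℂ := τ / 4 + 1 / 2 + m * τ

lemma ww_im (τ : ℂ) (m : ℤ) : (ww τ m).im = (m + 1 / 4) * τ.im := by
  unfold ww
  rw [show τ / 4 + 1 / 2 + m * τ = (((m : ℝ) + 1 / 4 : ℝ) : ℂ) * τ + ((1 / 2 : ℝ) : ℂ) by push_cast; ring]
  rw [add_im, im_ofReal_mul, ofReal_im, add_zero]

lemma ww_pos (τ : ℂ) (hτ : 0 < τ.im) (m : ℤ) (hm : 0 ≤ m) : 0 < (ww τ m).im := by
  rw [ww_im]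
  have : (0 : ℝ) ≤ m := by exact_mod_cast hm
  positivity

lemma ww_neg (τ : ℂ) (hτ : 0 < τ.im) (m : ℤ) (hm : m < 0) : (ww τ m).im < 0 := by
  rw [ww_im]
  have : (m : ℝ) ≤ -1 := by exact_mod_cast Int.le_sub_one_of_lt hm
  nlinarith

lemma poisson_m (τ : ℂ) (hτ : 0 < τ.im) (m : ℤ) :
    ∑' k : ℤ, ee (2 * (k + 1 / 2) * ww τ m) * ((sm m + Er τ.im (k + 1 / 2 - (-1 / 4)) : ℝ) : ℂ) =
      ∑' n : ℤ, ee n * PG τ.im (-1 / 4) (ww τ m + n) := by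
  unfold sm
  split_ifs with hm
  · rw [← poisson_pos τ.im (-1 / 4) (ww τ m) hτ (ww_pos τ hτ m hm)]
    refine tsum_congr fun k => ?_
    unfold hh
    push_cast
    rfl
  · rw [← poisson_neg τ.im (-1 / 4) (ww τ m) hτ (ww_neg τ hτ m (not_le.1 hm))]

lemma PG_GG (τ : ℂ) (hτ : 0 < τ.im) (m n : ℤ) :
    ee (m + m ^ 2 * τ + m * τ) * (ee n * PG τ.im (-1 / 4) (ww τ m + n)) =
      1 / Real.pi * ee (-(3 * τ / 16)) * GG τ ((m : ℝ) + 1 / 4) ((n : ℝ) + 1 / 2) := by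
  have hyC : (τ.im : ℂ) ≠ 0 := by exact_mod_cast hτ.ne'
  set p : ℝ := (m : ℝ) + 1 / 4 with hp
  set q : ℝ := (n : ℝ) + 1 / 2 with hq
  have hpC : (p : ℂ) = m + 1 / 4 := by rw [hp]; push_cast; ring
  have hqC : (q : ℂ) = n + 1 / 2 := by rw [hq]; push_cast; ring
  have hz : ww τ m + n = p * τ + q := by unfold ww; rw [hpC, hqC]; ring
  set z : ℂ := p * τ + q with hzd
  have him : z.im = p * τ.im := by rw [hzd]; simp
  have hsq : z ^ 2 = (normSq z : ℂ) + 2 * I * z * (p * τ.im) := by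
    have h1 : (normSq z : ℂ) = (starRingEnd ℂ z) * z := by rw [normSq_eq_conj_mul_self]
    have h2 : z - starRingEnd ℂ z = (2 * (p * τ.im) : ℝ) * I := by rw [sub_conj, him]
    rw [h1]
    push_cast at h2
    linear_combination z * h2
  have hE : Complex.exp (2 * Real.pi * I * ((-1 / 4 : ℝ) : ℂ) * z - Real.pi * z ^ 2 / (2 * τ.im)) =
      ee (-(1 / 2 + p) * z) * (Real.exp (-(Real.pi * normSq z / (2 * τ.im))) : ℝ) := by
    rw [hsq, ofReal_exp]
    unfold ee
    rw [← Complex.exp_add]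
    congr 1
    push_cast
    field_simp
    ring
  rw [hz]
  unfold PG GG
  rw [hE, ← hzd]
  have hmain : ee (m + m ^ 2 * τ + m * τ) * ee n * ee (-(1 / 2 + p) * z) = -I * (ee (-(3 * τ / 16)) * ee (p * q)) := by
    rw [show -I = ee (-(1 / 2)) by rw [ee_neg, ee_half, inv_I], ← ee_add, ← ee_add, ← ee_add, ← ee_add]
    refine ee_congr (-m * n) ?_
    rw [hzd, hpC, hqC]
    push_cast
    ring
  linear_combination (I / Real.pi * ((Real.exp (-(Real.pi * normSq z / (2 * τ.im))) : ℝ) : ℂ) / z) * hmain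
    - (1 / Real.pi * (ee (-(3 * τ / 16)) * ee (p * q)) * ((Real.exp (-(Real.pi * normSq z / (2 * τ.im))) : ℝ) : ℂ) / z) * I_sq

lemma gauss_summable (a s : ℝ) (ha : 0 < a) : Summable fun n : ℤ => Real.exp (-(a * (n + s) ^ 2)) := by
  have hτ : 0 < (((a / Real.pi : ℝ) : ℂ) * I).im := by
    simp; positivity
  have h := (summable_term (((s * a / Real.pi : ℝ) : ℂ) * I) hτ).norm.mul_left (Real.exp (-(a * s ^ 2)))
  refine h.congr fun n => ?_
  rw [norm_ee, ← Real.exp_add]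
  congr 1
  have : (2 * (n : ℂ) * (((s * a / Real.pi : ℝ) : ℂ) * I) + n ^ 2 * (((a / Real.pi : ℝ) : ℂ) * I))
    = (((2 * n * (s * a / Real.pi) + n ^ 2 * (a / Real.pi) : ℝ)) : ℂ) * I := by push_cast; ring
  rw [this, im_ofReal_mul, I_im]
  have := Real.pi_ne_zero
  simp
  field_simp
  ring

lemma GG_summable (τ : ℂ) (hτ : 0 < τ.im) :
    Summable fun z : ℤ × ℤ => GG τ ((z.1 : ℝ) + 1 / 4) ((z.2 : ℝ) + 1 / 2) := by
  set x := τ.re with hx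
  set y := τ.im with hy
  set κ : ℝ := y ^ 2 / (2 * x ^ 2 + 1 + 2 * y ^ 2) with hκ
  have hκ0 : 0 < κ := by positivity
  set a : ℝ := Real.pi * κ / (2 * y) with ha
  have ha0 : 0 < a := by positivity
  have hs := (gauss_summable a (1 / 4) ha0).mul_of_nonneg (gauss_summable a (1 / 2) ha0)
    (fun _ => (Real.exp_pos _).le) (fun _ => (Real.exp_pos _).le)
  refine Summable.of_norm_bounded (hs.mul_left (4 / y)) fun z => ?_
  set p : ℝ := (z.1 : ℝ) + 1 / 4 with hp
  set q : ℝ := (z.2 : ℝ) + 1 / 2 with hq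
  have hn : normSq (p * τ + q) = (p * x + q) ^ 2 + (p * y) ^ 2 := by
    rw [normSq_apply]; simp [hx, hy]; ring
  have hlow : κ * (p ^ 2 + q ^ 2) ≤ normSq (p * τ + q) := by
    rw [hn, hκ, div_mul_eq_mul_div, div_le_iff₀ (by positivity)]
    nlinarith [sq_nonneg (p * x + q), sq_nonneg (p * y), sq_nonneg (p * x), sq_nonneg (q + 2 * p * x), sq_nonneg (y * (q + 2 * p * x)), sq_nonneg (x * (p * x + q)), sq_nonneg (x * p * y), sq_nonneg (y * p * y), sq_nonneg (y * (p * x + q))]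
  have hp4 : 1 / 4 ≤ |p| := by
    rw [le_abs]
    rcases le_or_gt 0 z.1 with h | h
    · left
      have : (0 : ℝ) ≤ z.1 := by exact_mod_cast h
      rw [hp]; linarith
    · right
      have : (z.1 : ℝ) ≤ -1 := by exact_mod_cast Int.le_sub_one_of_lt h
      rw [hp]; linarith
  have hden : y / 4 ≤ ‖(p : ℂ) * τ + q‖ := by
    have h1 := Complex.abs_im_le_norm ((p : ℂ) * τ + q)
    have h2 : ((p : ℂ) * τ + q).im = p * y := by simp [hy]
    rw [h2, abs_mul, abs_of_pos hτ] at h1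
    nlinarith
  unfold GG
  rw [norm_div, norm_mul, norm_ee, Complex.norm_real, Real.norm_of_nonneg (Real.exp_pos _).le]
  have : ((p : ℂ) * q).im = 0 := by simp
  rw [this]
  simp only [mul_zero, neg_zero, Real.exp_zero, one_mul]
  rw [div_le_iff₀ (by linarith [div_pos hτ (by norm_num : (0:ℝ) < 4)]), ← Real.exp_add]
  have h3 : Real.exp (-(Real.pi * normSq (p * τ + q) / (2 * y))) ≤ Real.exp (-(a * p ^ 2) + -(a * q ^ 2)) := by
    apply Real.exp_le_exp.2
    have : Real.pi * (κ * (p ^ 2 + q ^ 2)) / (2 * y) ≤ Real.pi * normSq (p * τ + q) / (2 * y) := by gcongr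
    have h5 : Real.pi * (κ * (p ^ 2 + q ^ 2)) / (2 * y) = a * p ^ 2 + a * q ^ 2 := by rw [ha]; ring
    linarith
  refine h3.trans ?_
  have h6 : 1 ≤ 4 / y * ‖(p : ℂ) * τ + q‖ := by
    rw [div_mul_eq_mul_div, le_div_iff₀ hτ]; linarith
  have h7 := Real.exp_pos (-(a * p ^ 2) + -(a * q ^ 2))
  nlinarith

lemma one_sub_ne {z : ℂ} (h : ‖z‖ < 1) : 1 - z ≠ 0 := by
  intro h0
  have : z = 1 := by linear_combination -h0
  rw [this] at h; simp at h

lemma B_hasSum (τ : ℂ) (hτ : 0 < τ.im) (m : ℤ) :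
    HasSum (fun k : ℤ => ee (2 * (k + 1 / 2) * ww τ m) * ((sm m + Real.sign (k + 1 / 2) : ℝ) : ℂ))
      (2 * ee (ww τ m) / (1 - ee (2 * ww τ m))) := by
  set w := ww τ m with hw
  have hsp : ∀ n : ℕ, Real.sign (((n : ℤ) : ℝ) + 1 / 2) = 1 := fun n =>
    Real.sign_of_pos (by push_cast; positivity)
  have hsn : ∀ n : ℕ, Real.sign (((-((n : ℤ) + 1) : ℤ) : ℝ) + 1 / 2) = -1 := fun n =>
    Real.sign_of_neg (by push_cast; have : (0 : ℝ) ≤ n := by positivity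
                         linarith)
  have hpow : ∀ (x : ℂ) (n : ℕ), ee x ^ n = ee (n * x) := by
    intro x n; unfold ee; rw [← Complex.exp_nat_mul]; ring_nf
  rcases le_or_gt 0 m with hm | hm
  · have hsm : sm m = 1 := if_pos hm
    have hnorm : ‖ee (2 * w)‖ < 1 := by
      rw [norm_ee, Real.exp_lt_one_iff]
      have := ww_pos τ hτ m hm
      have h2 : (2 * w).im = 2 * (ww τ m).im := by simp [hw]
      rw [h2]; have := Real.pi_pos; nlinarith [mul_pos Real.pi_pos (ww_pos τ hτ m hm)]
    rw [hsm]
    have h1 := (hasSum_geometric_of_norm_lt_one hnorm).mul_left (2 * ee w)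
    have h3 : HasSum (fun n : ℕ => ee (2 * (((n : ℤ) : ℂ) + 1 / 2) * w) * ((1 + Real.sign (((n : ℤ) : ℝ) + 1 / 2) : ℝ) : ℂ)) (2 * ee w * (1 - ee (2 * w))⁻¹) := by
      refine h1.congr_fun fun n => ?_
      rw [hsp, hpow, mul_assoc 2 (ee w), ← ee_add]
      push_cast
      rw [show (2 * ((n : ℂ) + 1 / 2) * w) = w + n * (2 * w) by ring]; ring
    have h4 : HasSum (fun n : ℕ => ee (2 * (((-((n : ℤ) + 1) : ℤ) : ℂ) + 1 / 2) * w) * ((1 + Real.sign (((-((n : ℤ) + 1) : ℤ) : ℝ) + 1 / 2) : ℝ) : ℂ)) 0 := by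
      convert hasSum_zero using 2 with n
      rw [hsn]; simp
    have := HasSum.of_nat_of_neg_add_one (f := fun k : ℤ => ee (2 * (k + 1 / 2) * w) * ((1 + Real.sign (k + 1 / 2) : ℝ) : ℂ)) h3 h4
    rw [add_zero] at this
    exact this
  · have hsm : sm m = -1 := if_neg (not_le.2 hm)
    have hnorm : ‖ee (-(2 * w))‖ < 1 := by
      rw [norm_ee, Real.exp_lt_one_iff]
      have h2 : (-(2 * w)).im = -2 * (ww τ m).im := by simp [hw]
      rw [h2]; nlinarith [mul_pos Real.pi_pos (neg_pos.2 (ww_neg τ hτ m hm))]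
    rw [hsm]
    have h1 := (hasSum_geometric_of_norm_lt_one hnorm).mul_left (-2 * ee (-w))
    have h4 : HasSum (fun n : ℕ => ee (2 * (((-((n : ℤ) + 1) : ℤ) : ℂ) + 1 / 2) * w) * ((-1 + Real.sign (((-((n : ℤ) + 1) : ℤ) : ℝ) + 1 / 2) : ℝ) : ℂ)) (-2 * ee (-w) * (1 - ee (-(2 * w)))⁻¹) := by
      refine h1.congr_fun fun n => ?_
      rw [hsn, hpow, mul_assoc (-2) (ee (-w)), ← ee_add]
      push_cast
      rw [show (2 * (-((n : ℂ) + 1) + 1 / 2) * w) = -w + n * -(2 * w) by ring]; ring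
    have h3 : HasSum (fun n : ℕ => ee (2 * (((n : ℤ) : ℂ) + 1 / 2) * w) * ((-1 + Real.sign (((n : ℤ) : ℝ) + 1 / 2) : ℝ) : ℂ)) 0 := by
      convert hasSum_zero using 2 with n
      rw [hsp]; simp
    have := HasSum.of_nat_of_neg_add_one (f := fun k : ℤ => ee (2 * (k + 1 / 2) * w) * ((-1 + Real.sign (k + 1 / 2) : ℝ) : ℂ)) h3 h4
    rw [zero_add] at this
    convert this using 1
    have e1 : ee (2 * w) = ee w * ee w := by rw [← ee_add]; ring_nf
    have hn := one_sub_ne hnorm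
    have hw0 := ee_ne w
    rw [ee_neg, e1] at hn
    rw [ee_neg (2 * w), e1, ee_neg w]
    have hn2 : 1 - ee w * ee w ≠ 0 := by
      intro h; apply hn
      have h1 : ee w * ee w = 1 := by linear_combination -h
      rw [h1]; simp
    have h5 : 1 - (ee w * ee w)⁻¹ = -(1 - ee w * ee w) / (ee w * ee w) := by field_simp; ring
    rw [h5]
    field_simp

noncomputable def tt (τ : ℂ) (j : ℤ) : ℂ := ee (2 * (j + 1 / 2) * (τ / 2 + 1 / 2) + τ * (j + 1 / 2) ^ 2)

noncomputable def rr (τ : ℂ) (n : ℤ) : ℂ :=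
  ((Real.sign (n + 1 / 2) - Er τ.im (n + 1 / 2 - 1 / 4) : ℝ) : ℂ) *
    ee (n - (n + 1 / 2) ^ 2 * τ - 2 * (n + 1 / 2) * (τ / 4 + 1 / 2 - τ / 2))

lemma tt_sum (τ : ℂ) : ∑' j, tt τ j = jacobiThetaZw (τ / 2) τ := by
  unfold tt jacobiThetaZw
  refine tsum_congr fun j => ?_
  unfold ee
  rw [← Complex.exp_add]
  congr 1
  ring

lemma rr_sum (τ : ℂ) (hτ : 0 < τ.im) : ∑' j, rr τ j = Rzw (τ / 4 + 1 / 2 - τ / 2) τ := by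
  unfold rr Rzw
  refine tsum_congr fun n => ?_
  have him : (τ / 4 + 1 / 2 - τ / 2).im / τ.im = -1 / 4 := by
    rw [show τ / 4 + 1 / 2 - τ / 2 = ((-1 / 4 : ℝ) : ℂ) * τ + ((1 / 2 : ℝ) : ℂ) by push_cast; ring]
    rw [add_im, im_ofReal_mul, ofReal_im, add_zero, mul_div_cancel_right₀ _ hτ.ne']
  rw [him, mul_assoc (_ : ℂ) ((-1 : ℂ) ^ n), ← ee_int]
  unfold Er ee
  rw [← Complex.exp_add]
  congr 2
  · ring_nf
  · ring

lemma tt_summable (τ : ℂ) (hτ : 0 < τ.im) : Summable fun j => ‖tt τ j‖ := by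
  have h := (summable_term (τ + 1 / 2) hτ).norm.mul_left ‖ee (τ / 2 + 1 / 2 + τ / 4)‖
  refine h.congr fun j => ?_
  rw [← norm_mul, ← ee_add]
  unfold tt
  ring_nf

lemma rr_summable (τ : ℂ) (hτ : 0 < τ.im) : Summable fun j => ‖rr τ j‖ := by
  have h := (summable_term (τ / 4) hτ).norm.mul_left (Real.exp (-(Real.pi * τ.im / 8)))
  refine Summable.of_nonneg_of_le (fun _ => norm_nonneg _) (fun n => ?_) h
  have hne : ((n : ℝ) + 1 / 2 - 1 / 4) ≠ 0 := by
    intro h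
    have : (4 * n + 1 : ℝ) = 0 := by linarith
    have : 4 * n + 1 = 0 := by exact_mod_cast this
    omega
  have hsg : Real.sign ((n : ℝ) + 1 / 2) = Real.sign ((n : ℝ) + 1 / 2 - 1 / 4) := by
    rcases le_or_gt 0 n with h | h
    · have : (0 : ℝ) ≤ n := by exact_mod_cast h
      rw [Real.sign_of_pos (by linarith), Real.sign_of_pos (by linarith)]
    · have : (n : ℝ) ≤ -1 := by exact_mod_cast Int.le_sub_one_of_lt h
      rw [Real.sign_of_neg (by linarith), Real.sign_of_neg (by linarith)]
  unfold rr
  rw [norm_mul, Complex.norm_real, Real.norm_eq_abs, hsg, norm_ee, norm_ee]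
  have h1 := Er_sgn τ.im _ hτ hne
  refine (mul_le_mul_of_nonneg_right h1 (Real.exp_pos _).le).trans ?_
  rw [← Real.exp_add, ← Real.exp_add]
  apply Real.exp_le_exp.2
  have e1 : ((n : ℂ) - (n + 1 / 2) ^ 2 * τ - 2 * (n + 1 / 2) * (τ / 4 + 1 / 2 - τ / 2)).im
     = (-(n + 1 / 2) ^ 2 + (n + 1 / 2) / 2) * τ.im := by
    rw [show ((n : ℂ) - (n + 1 / 2) ^ 2 * τ - 2 * (n + 1 / 2) * (τ / 4 + 1 / 2 - τ / 2)) =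
      ((-(n + 1 / 2) ^ 2 + (n + 1 / 2) / 2 : ℝ) : ℂ) * τ + ((n - (n + 1 / 2) : ℝ) : ℂ) by push_cast; ring]
    rw [add_im, im_ofReal_mul, ofReal_im, add_zero]
  have e2 : (2 * (n : ℂ) * (τ / 4) + n ^ 2 * τ).im = (n / 2 + n ^ 2) * τ.im := by
    rw [show (2 * (n : ℂ) * (τ / 4) + n ^ 2 * τ) = ((n / 2 + n ^ 2 : ℝ) : ℂ) * τ by push_cast; ring, im_ofReal_mul]
  rw [e1, e2]
  apply le_of_eq
  ring

noncomputable def AA (τ : ℂ) (z : ℤ × ℤ) : ℂ :=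
  ee (z.1 + z.1 ^ 2 * τ + z.1 * τ) * (ee (2 * (z.2 + 1 / 2) * ww τ z.1) *
    ((Er τ.im (z.2 + 1 / 2 - (-1 / 4)) - Real.sign (z.2 + 1 / 2) : ℝ) : ℂ))

def shE : ℤ × ℤ ≃ ℤ × ℤ where
  toFun z := (z.1 + z.2, -z.2 - 1)
  invFun z := (z.1 + z.2 + 1, -z.2 - 1)
  left_inv z := by ext <;> simp <;> ring
  right_inv z := by ext <;> simp

lemma AA_eq (τ : ℂ) (z : ℤ × ℤ) : AA τ z = I * (tt τ (shE z).1 * rr τ (shE z).2) := by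
  obtain ⟨m, k⟩ := z
  unfold AA tt rr
  simp only [shE, Equiv.coe_fn_mk]
  have h1 : Er τ.im (((-k - 1 : ℤ) : ℝ) + 1 / 2 - 1 / 4) = -Er τ.im (k + 1 / 2 - (-1 / 4)) := by
    rw [← Er_neg]; congr 1; push_cast; ring
  have h2 : Real.sign (((-k - 1 : ℤ) : ℝ) + 1 / 2) = -Real.sign (k + 1 / 2) := by
    rw [← Real.sign_neg]; congr 1; push_cast; ring
  rw [h1, h2]
  rw [show I * (ee (2 * (((m + k : ℤ) : ℂ) + 1 / 2) * (τ / 2 + 1 / 2) + τ * (((m + k : ℤ) : ℂ) + 1 / 2) ^ 2) *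
    (((-Real.sign (k + 1 / 2) - -Er τ.im (k + 1 / 2 - (-1 / 4)) : ℝ) : ℂ) *
      ee (((-k - 1 : ℤ) : ℂ) - (((-k - 1 : ℤ) : ℂ) + 1 / 2) ^ 2 * τ - 2 * (((-k - 1 : ℤ) : ℂ) + 1 / 2) * (τ / 4 + 1 / 2 - τ / 2)))) =
    (ee (1 / 2) * ee (2 * (((m + k : ℤ) : ℂ) + 1 / 2) * (τ / 2 + 1 / 2) + τ * (((m + k : ℤ) : ℂ) + 1 / 2) ^ 2) *
      ee (((-k - 1 : ℤ) : ℂ) - (((-k - 1 : ℤ) : ℂ) + 1 / 2) ^ 2 * τ - 2 * (((-k - 1 : ℤ) : ℂ) + 1 / 2) * (τ / 4 + 1 / 2 - τ / 2)))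
      * ((Er τ.im (k + 1 / 2 - (-1 / 4)) - Real.sign (k + 1 / 2) : ℝ) : ℂ) by
      rw [ee_half]; push_cast; ring]
  rw [← mul_assoc, ← ee_add, ← ee_add, ← ee_add]
  congr 2
  unfold ww
  push_cast
  ring

lemma AA_hasSum (τ : ℂ) (hτ : 0 < τ.im) :
    HasSum (AA τ) (I * (jacobiThetaZw (τ / 2) τ * Rzw (τ / 4 + 1 / 2 - τ / 2) τ)) := by
  have hs : Summable (fun z : ℤ × ℤ => tt τ z.1 * rr τ z.2) :=
    summable_mul_of_summable_norm (f := tt τ) (g := rr τ) (tt_summable τ hτ) (rr_summable τ hτ)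
  have h1 : HasSum (fun z : ℤ × ℤ => tt τ z.1 * rr τ z.2)
      (jacobiThetaZw (τ / 2) τ * Rzw (τ / 4 + 1 / 2 - τ / 2) τ) := by
    rw [← tt_sum, ← rr_sum τ hτ]
    exact (tt_summable τ hτ).of_norm.hasSum.mul (rr_summable τ hτ).of_norm.hasSum hs
  have h2 := (shE.hasSum_iff.2 h1).mul_left I
  refine h2.congr_fun ?_
  intro z
  exact AA_eq τ z

lemma key_sum (τ : ℂ) (hτ : 0 < τ.im) :
    HasSum (fun m : ℤ => ee (m + m ^ 2 * τ + m * τ) * (2 * ee (ww τ m) / (1 - ee (2 * ww τ m))))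
      (1 / Real.pi * ee (-(3 * τ / 16)) * LL τ -
        I * (jacobiThetaZw (τ / 2) τ * Rzw (τ / 4 + 1 / 2 - τ / 2) τ)) := by
  have hA := AA_hasSum τ hτ
  have hT := (GG_summable τ hτ).hasSum.mul_left (1 / Real.pi * ee (-(3 * τ / 16)))
  have hA1 := hA.prod_fiberwise (fun m => (hA.summable.prod_factor m).hasSum)
  have hT1 := hT.prod_fiberwise (fun m => (hT.summable.prod_factor m).hasSum)
  refine (hT1.sub hA1).congr_fun ?_
  intro m
  have e1 : ∀ n : ℤ, 1 / Real.pi * ee (-(3 * τ / 16)) * GG τ ((m : ℝ) + 1 / 4) ((n : ℝ) + 1 / 2) =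
    ee (m + m ^ 2 * τ + m * τ) * (ee n * PG τ.im (-1 / 4) (ww τ m + n)) := fun n => (PG_GG τ hτ m n).symm
  have hAm := hA.summable.prod_factor m
  have hB := (B_hasSum τ hτ m).mul_left (ee (m + m ^ 2 * τ + m * τ))
  simp only
  simp_rw [e1]
  rw [tsum_mul_left, ← poisson_m τ hτ m, ← tsum_mul_left, eq_sub_iff_add_eq, ← hB.tsum_eq, ← hB.summable.tsum_add hAm]
  refine tsum_congr fun k => ?_
  unfold AA
  push_cast
  ring

lemma key (τ : ℂ) (hτ : 0 < τ.im) : Vhat11 τ = LL τ / (2 * Real.pi * I * Th4 τ) := by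
  have hK := (key_sum τ hτ).tsum_eq
  have hθ : jacobiThetaZw (τ / 2) τ = -I * ee (-(τ / 4)) * Th4 τ := by
    have h := KN_half τ
    unfold KN at h
    rw [show (1 / 2 : ℂ) * τ + 0 = τ / 2 by ring, show (1 / 2 : ℂ) * (τ / 2) = τ / 4 by ring] at h
    rw [ee_neg]
    field_simp [ee_ne (τ / 4)]
    linear_combination h
  have hT := Th4_ne hτ
  have hθ0 : jacobiThetaZw (τ / 2) τ ≠ 0 := by
    rw [hθ]; exact mul_ne_zero (mul_ne_zero (neg_ne_zero.2 I_ne_zero) (ee_ne _)) hT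
  have hmu : 2 * jacobiThetaZw (τ / 2) τ * muZw (τ / 4 + 1 / 2) (τ / 2) τ =
      ∑' m : ℤ, ee (m + m ^ 2 * τ + m * τ) * (2 * ee (ww τ m) / (1 - ee (2 * ww τ m))) := by
    unfold muZw
    rw [← mul_assoc, show ∀ x y : ℂ, 2 * jacobiThetaZw (τ / 2) τ * (x / jacobiThetaZw (τ / 2) τ) * y = (2 * x) * y by
      intro x y; field_simp, ← tsum_mul_left]
    refine tsum_congr fun m => ?_
    have e1 : Complex.exp (2 * (Real.pi : ℂ) * I * (τ / 4 + 1 / 2)) * Complex.exp (2 * (Real.pi : ℂ) * I * (m : ℂ) * τ)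
      = ee (2 * ww τ m) := by
      unfold ee ww; rw [← Complex.exp_add]; congr 1; ring
    have e2 : Complex.exp ((Real.pi : ℂ) * I * (τ / 4 + 1 / 2)) * ((-1 : ℂ) ^ m * Complex.exp (2 * (Real.pi : ℂ) * I * (m : ℂ) * (τ / 2)) *
      Complex.exp ((Real.pi : ℂ) * I * τ * (m : ℂ) * ((m : ℂ) + 1))) = ee (m + m ^ 2 * τ + m * τ) * ee (ww τ m) := by
      rw [← ee_int]
      unfold ee ww
      rw [← Complex.exp_add, ← Complex.exp_add, ← Complex.exp_add, ← Complex.exp_add]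
      congr 1; ring
    rw [e1]
    rw [mul_div_assoc', mul_assoc 2, e2]
    ring
  rw [← hmu] at hK
  have hhat : muHat (τ / 4 + 1 / 2) (τ / 2) τ = 1 / Real.pi * ee (-(3 * τ / 16)) * LL τ / (2 * jacobiThetaZw (τ / 2) τ) := by
    unfold muHat
    rw [eq_div_iff (mul_ne_zero two_ne_zero hθ0)]
    linear_combination hK
  unfold Vhat11
  rw [hhat, hθ, show Complex.exp (-(Real.pi : ℂ) * I * τ / 16) = ee (-(τ / 16)) by unfold ee; ring_nf]
  have e3 : ee (-(τ / 4)) = ee (-(τ / 16)) * ee (-(3 * τ / 16)) := by rw [← ee_add]; ring_nf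
  rw [e3]
  have n1 := ee_ne (-(τ / 16))
  have n2 := ee_ne (-(3 * τ / 16))
  have hpi : (Real.pi : ℂ) ≠ 0 := by exact_mod_cast Real.pi_ne_zero
  have hI := I_ne_zero
  generalize ee (-(3 * τ / 16)) = X at *
  field_simp

/-- Theorem 1.1 for `(m,n) = (1,1)`: modular transformation of `V̂₁₁` on
`Γ¹(4) ∩ Γ₀(2)`, with the eta-multiplier absorbed via `η(γτ)³`. -/
theorem Vhat11_transform (a b c d : ℤ) (hdet : a * d - b * c = 1)
    (ha : Int.ModEq 4 a 1) (hd : Int.ModEq 4 d 1)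
    (hb : Int.ModEq 4 b 0) (hc : Int.ModEq 2 c 0) :
    ∀ τ : ℂ, 0 < τ.im →
      Vhat11 (((a : ℂ) * τ + b) / ((c : ℂ) * τ + d)) *
          dedekindEta (((a : ℂ) * τ + b) / ((c : ℂ) * τ + d)) ^ 3 =
        (-1 : ℂ) ^ ((a - 1) / 4 + c / 2 + (b / 4 + (d - 1) / 2) + (a - 1) / 2 + b / 2) *
          Complex.exp (2 * (Real.pi : ℂ) * I * (((4 - 4 * a - a * b + 4 * c : ℤ) : ℂ) / 32)) *
          ((c : ℂ) * τ + d) ^ 2 * dedekindEta τ ^ 3 * Vhat11 τ := by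
  intro τ hτ
  have h0 := cd_ne a b c d hdet τ hτ
  have hn : 0 < normSq ((c : ℂ) * τ + d) := normSq_pos.2 h0
  have him : 0 < (((a : ℂ) * τ + b) / ((c : ℂ) * τ + d)).im := by
    rw [mob_im a b c d hdet τ]; positivity
  obtain ⟨k, hk⟩ := ha.symm.dvd
  obtain ⟨δ, hδ⟩ := hd.symm.dvd
  obtain ⟨β, hβ⟩ := hb.symm.dvd
  obtain ⟨κ, hκ⟩ := hc.symm.dvd
  have hk : a = 1 + 4 * k := by omega
  have hδ : d = 1 + 4 * δ := by omega
  have hβ : b = 4 * β := by omega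
  have hκ : c = 2 * κ := by omega
  have hK := KK_gamma a b c d hdet k β hk hβ τ hτ
  have hL := LL_gamma a b c d k β κ δ hdet hk hβ hκ hδ τ hτ
  have e1 : (a - 1) / 4 + c / 2 + (b / 4 + (d - 1) / 2) + (a - 1) / 2 + b / 2 =
    k + κ + β + 2 * δ + 2 * k + 2 * β := by omega
  have e2 : (-1 : ℂ) ^ ((a - 1) / 4 + c / 2 + (b / 4 + (d - 1) / 2) + (a - 1) / 2 + b / 2) *
          Complex.exp (2 * (Real.pi : ℂ) * I * (((4 - 4 * a - a * b + 4 * c : ℤ) : ℂ) / 32))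
      = ee (-((a : ℂ) * b / 16 + c * d / 4)) / ee β := by
    rw [e1, ← ee_int, show Complex.exp (2 * (Real.pi : ℂ) * I * (((4 - 4 * a - a * b + 4 * c : ℤ) : ℂ) / 32)) =
      ee (((4 - 4 * a - a * b + 4 * c : ℤ) : ℂ) / 16) by unfold ee; ring_nf, div_eq_mul_inv (ee (-_)), ← ee_neg, ← ee_add, ← ee_add]
    refine ee_congr (δ + k + 2 * β + κ * (1 + δ)) ?_
    rw [hk, hδ, hβ, hκ]
    push_cast
    ring
  have t1 := Th4_ne hτ
  have t2 := Th4_ne him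
  have n1 := eta_ne hτ
  have n2 := eta_ne him
  rw [e2, key _ him, key _ hτ, hL]
  generalize Th4 (((a : ℂ) * τ + b) / ((c : ℂ) * τ + d)) = T at *
  generalize dedekindEta (((a : ℂ) * τ + b) / ((c : ℂ) * τ + d)) = N at *
  generalize Th4 τ = T0 at *
  generalize dedekindEta τ = N0 at *
  generalize (c : ℂ) * τ + d = D at *
  have hb0 := ee_ne (β : ℂ)
  generalize ee (β : ℂ) = B at *
  have hpi : (Real.pi : ℂ) ≠ 0 := by exact_mod_cast Real.pi_ne_zero
  have hK2 : D * T * N0 ^ 3 = B * T0 * N ^ 3 := by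
    field_simp at hK
    linear_combination hK
  have hI := I_ne_zero
  generalize ee (-((a : ℂ) * b / 16 + c * d / 4)) = X
  generalize LL τ = Y
  have hN : N ^ 3 = D * T * N0 ^ 3 / (B * T0) := by
    rw [eq_div_iff (mul_ne_zero hb0 t1)]; linear_combination -hK2
  rw [hN]
  field_simp
end

section
/- Let S := {h/k ∈ ℚ : h ∈ ℤ odd, k ∈ ℕ, k ≥ 1, gcd(h,k) = 1}, let S' := {h/k ∈ S : h ≡ 1 or 5 (mod 6)}, and let S_ev := {h/k ∈ S : k even}. Then: (a) for every x ∈ S': x + 6 ∈ S', x − 6 ∈ S', and, whenever the denominators are nonzero, x/(2x+1) ∈ S' and x/(1−2x) ∈ S'; (b) for every x ∈ S' ∪ S_ev: x + 6 ∈ S' ∪ S_ev, x − 6 ∈ S' ∪ S_ev, and, whenever the denominators are nonzero, x/(2x+1) ∈ S' ∪ S_ev and x/(1−2x) ∈ S' ∪ S_ev. (These are the closure properties of the quantum sets S₃₁ = S₆₁ = S' and S₅₁ = S' ∪ S_ev under the group ⟨(1 0; 2 1), (1 6; 0 1)⟩.) -/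
theorem aux_numden (a b : ℤ) (h : IsCoprime a b) (hb : b ≠ 0) (y : ℚ) (hy : y = a / b) :
    (y.num = a ∧ (y.den : ℤ) = b) ∨ (y.num = -a ∧ (y.den : ℤ) = -b) := by
  have key : ∀ a b : ℤ, IsCoprime a b → 0 < b → y = a / b → (y.num = a ∧ (y.den : ℤ) = b) := by
    intro a b h hb hy
    have h' : Nat.Coprime a.natAbs b.natAbs := Int.isCoprime_iff_gcd_eq_one.mp h
    subst hy
    exact ⟨Rat.num_div_eq_of_coprime hb h', Rat.den_div_eq_of_coprime hb h'⟩
  rcases lt_or_gt_of_ne hb with hb | hb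
  · right
    exact key (-a) (-b) h.neg_neg (by omega) (by rw [hy]; push_cast; rw [neg_div_neg_eq])
  · left
    exact key a b h hb hy

theorem aux_all (x : ℚ) :
    (∃ n : ℤ, (x + 6).num = x.num + 6 * n ∧ (x + 6).den = x.den) ∧
    (∃ n : ℤ, (x - 6).num = x.num + 6 * n ∧ (x - 6).den = x.den) ∧
    (2 * x + 1 ≠ 0 → ((x / (2 * x + 1)).num = x.num ∨ (x / (2 * x + 1)).num = -x.num) ∧
      ∃ n : ℤ, ((x / (2 * x + 1)).den : ℤ) = x.den + 2 * n) ∧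
    (1 - 2 * x ≠ 0 → ((x / (1 - 2 * x)).num = x.num ∨ (x / (1 - 2 * x)).num = -x.num) ∧
      ∃ n : ℤ, ((x / (1 - 2 * x)).den : ℤ) = x.den + 2 * n) := by
  have hc : IsCoprime x.num (x.den : ℤ) := Int.isCoprime_iff_gcd_eq_one.mpr x.reduced
  have hd : (x.den : ℤ) ≠ 0 := by exact_mod_cast x.den_nz
  have hdp : 0 < (x.den : ℤ) := by exact_mod_cast x.pos
  have hdq : (x.den : ℚ) ≠ 0 := by exact_mod_cast x.den_nz
  have hx : (x.num : ℚ) = x * x.den := (Rat.mul_den_eq_num x).symm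
  refine ⟨?_, ?_, ?_, ?_⟩
  · have := aux_numden (x.num + x.den * 6) x.den (hc.add_mul_left_left 6) hd (x + 6)
      (by push_cast; rw [hx]; field_simp)
    rcases this with ⟨h1, h2⟩ | ⟨h1, h2⟩
    · exact ⟨x.den, by rw [h1]; ring, by exact_mod_cast h2⟩
    · omega
  · have := aux_numden (x.num + x.den * (-6)) x.den (hc.add_mul_left_left (-6)) hd (x - 6)
      (by push_cast; rw [hx]; field_simp; ring)
    rcases this with ⟨h1, h2⟩ | ⟨h1, h2⟩
    · exact ⟨-x.den, by rw [h1]; ring, by exact_mod_cast h2⟩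
    · omega
  · intro hne
    have e : ((x.den + x.num * 2 : ℤ) : ℚ) = x.den * (2 * x + 1) := by
      push_cast; rw [hx]; ring
    have := aux_numden x.num (x.den + x.num * 2) (hc.add_mul_left_right 2)
      (by intro h0; rw [h0] at e; exact mul_ne_zero hdq hne (by rw [← e]; simp))
      (x / (2 * x + 1)) (by rw [e, hx]; field_simp)
    rcases this with ⟨h1, h2⟩ | ⟨h1, h2⟩
    · exact ⟨Or.inl h1, x.num, by omega⟩
    · exact ⟨Or.inr h1, -x.num - x.den, by omega⟩
  · intro hne
    have e : ((x.den + x.num * (-2) : ℤ) : ℚ) = x.den * (1 - 2 * x) := by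
      push_cast; rw [hx]; ring
    have := aux_numden x.num (x.den + x.num * (-2)) (hc.add_mul_left_right (-2))
      (by intro h0; rw [h0] at e; exact mul_ne_zero hdq hne (by rw [← e]; simp))
      (x / (1 - 2 * x)) (by rw [e, hx]; field_simp)
    rcases this with ⟨h1, h2⟩ | ⟨h1, h2⟩
    · exact ⟨Or.inl h1, -x.num, by omega⟩
    · exact ⟨Or.inr h1, x.num - x.den, by omega⟩

/-- The set `S` of rational numbers with odd numerator in lowest terms. -/
def Sodd : Set ℚ := {x | Odd x.num}

/-- `S' = {h/k ∈ S : h ≡ ±1 (mod 6)}`. -/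
def Sprime : Set ℚ := {x | Odd x.num ∧ (x.num % 6 = 1 ∨ x.num % 6 = 5)}

/-- `S_ev = {h/k ∈ S : k even}`. -/
def Sev : Set ℚ := {x | Odd x.num ∧ Even x.den}

/-- Closure of the quantum sets `S₃₁ = S₆₁ = S'` and `S₅₁ = S' ∪ S_ev` under the
generators (and inverses) of `⟨(1 0; 2 1), (1 6; 0 1)⟩`. -/
theorem Sprime_Sev_closed :
    (∀ x ∈ Sprime,
      x + 6 ∈ Sprime ∧ x - 6 ∈ Sprime ∧
      (2 * x + 1 ≠ 0 → x / (2 * x + 1) ∈ Sprime) ∧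
      (1 - 2 * x ≠ 0 → x / (1 - 2 * x) ∈ Sprime)) ∧
    (∀ x ∈ Sprime ∪ Sev,
      x + 6 ∈ Sprime ∪ Sev ∧ x - 6 ∈ Sprime ∪ Sev ∧
      (2 * x + 1 ≠ 0 → x / (2 * x + 1) ∈ Sprime ∪ Sev) ∧
      (1 - 2 * x ≠ 0 → x / (1 - 2 * x) ∈ Sprime ∪ Sev)) := by
  constructor
  all_goals
    intro x hx
    obtain ⟨⟨n, h1, h2⟩, ⟨m, h3, h4⟩, h5, h6⟩ := aux_all x
    simp only [Sprime, Sev, Set.mem_union, Set.mem_setOf_eq, Int.odd_iff, Nat.even_iff] at hx ⊢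
    refine ⟨by omega, by omega, fun h => ?_, fun h => ?_⟩
    · obtain ⟨h7, k, h8⟩ := h5 h
      omega
    · obtain ⟨h7, k, h8⟩ := h6 h
      omega
end

section
/- Let h ∈ ℤ be odd and k ∈ ℕ with k ≥ 1 and gcd(h,k) = 1. (a) If h ≡ 1 or 5 (mod 6), then there exist no integers j and r satisfying 2h(3j+1) = 3k(4r−1), and no integers j and r satisfying 2h(3j+2) = 3k(4r+1). (b) If h ≡ 3 (mod 6) and k is even, then there exist integers j and r with 0 ≤ j < k such that 2h(3j+1) = 3k(4r−1) or 2h(3j+2) = 3k(4r+1). (This is the arithmetic content of Lemma 4.2 for m = 3: the series g₂(i·e^{πih/(3k)}; e^{πih/k}) terminates without a vanishing denominator exactly on the set S₃₁.) -/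
/-- The arithmetic content of Lemma 4.2 for `m = 3`: termination without vanishing
denominators of `g₂(i e^{πih/(3k)}; e^{πih/k})` happens exactly on `S₃₁`. -/
theorem g2_termination_m3 (h : ℤ) (k : ℕ) (hk : 1 ≤ k)
    (hodd : Odd h) (hcop : Int.gcd h (k : ℤ) = 1) :
    ((h % 6 = 1 ∨ h % 6 = 5) →
      (¬∃ j r : ℤ, 2 * h * (3 * j + 1) = 3 * (k : ℤ) * (4 * r - 1)) ∧
      (¬∃ j r : ℤ, 2 * h * (3 * j + 2) = 3 * (k : ℤ) * (4 * r + 1))) ∧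
    ((h % 6 = 3 ∧ Even k) →
      ∃ j r : ℤ, 0 ≤ j ∧ j < (k : ℤ) ∧
        (2 * h * (3 * j + 1) = 3 * (k : ℤ) * (4 * r - 1) ∨
          2 * h * (3 * j + 2) = 3 * (k : ℤ) * (4 * r + 1))) := by
  refine ⟨fun hh => ⟨?_, ?_⟩, ?_⟩
  · rintro ⟨j, r, e⟩
    have h3 : (3 : ℤ) ∣ h := by
      have : (3 : ℤ) ∣ 2 * h := ⟨(k : ℤ) * (4 * r - 1) - 2 * h * j, by linarith⟩
      omega
    omega
  · rintro ⟨j, r, e⟩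
    have h3 : (3 : ℤ) ∣ h := by
      have : (3 : ℤ) ∣ 4 * h := ⟨(k : ℤ) * (4 * r + 1) - 2 * h * j, by linarith⟩
      omega
    omega
  · rintro ⟨h6, hev⟩
    have hk3 : ¬ (3 : ℤ) ∣ (k : ℤ) := by
      intro hd
      have h3 : (3 : ℤ) ∣ h := by omega
      have := Int.dvd_coe_gcd h3 hd
      rw [hcop] at this
      norm_num at this
    obtain ⟨a, ha⟩ : ∃ a : ℤ, h = 3 * a := ⟨h / 3, by omega⟩
    obtain ⟨b, hb⟩ : ∃ b : ℤ, (k : ℤ) = 2 * b := by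
      obtain ⟨c, hc⟩ := hev
      exact ⟨c, by omega⟩
    have hbpos : 1 ≤ b := by omega
    have hb3 : b % 3 = 1 ∨ b % 3 = 2 := by omega
    have ha4 : a % 4 = 1 ∨ a % 4 = 3 := by omega
    rw [hb, ha]
    rcases ha4 with ha4 | ha4 <;> rcases hb3 with hb3 | hb3
    · refine ⟨(5 * b - 2) / 3, (5 * a - 1) / 4, by omega, by omega, Or.inr ?_⟩
      rw [show 3 * ((5 * b - 2) / 3) + 2 = 5 * b by omega,
        show 4 * ((5 * a - 1) / 4) + 1 = 5 * a by omega]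
      ring
    · refine ⟨(b - 2) / 3, (a - 1) / 4, by omega, by omega, Or.inr ?_⟩
      rw [show 3 * ((b - 2) / 3) + 2 = b by omega,
        show 4 * ((a - 1) / 4) + 1 = a by omega]
      ring
    · refine ⟨(b - 1) / 3, (a + 1) / 4, by omega, by omega, Or.inl ?_⟩
      rw [show 3 * ((b - 1) / 3) + 1 = b by omega,
        show 4 * ((a + 1) / 4) - 1 = a by omega]
      ring
    · refine ⟨(5 * b - 1) / 3, (5 * a + 1) / 4, by omega, by omega, Or.inl ?_⟩
      rw [show 3 * ((5 * b - 1) / 3) + 1 = 5 * b by omega,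
        show 4 * ((5 * a + 1) / 4) - 1 = 5 * a by omega]
      ring
end

section
/- Let h ∈ ℤ be odd and k ∈ ℕ with k ≥ 1 and gcd(h,k) = 1. (a) If h ≡ 1 or 5 (mod 6), then there exist no integers n and r satisfying h(3n+1) = 3k(2r+1), and no integers n and r satisfying h(3n+2) = 3k(2r+1). (b) If h ≡ 3 (mod 6) and k is odd, then there exist integers n and r with 0 ≤ n < k such that h(3n+1) = 3k(2r+1) or h(3n+2) = 3k(2r+1). (This is the arithmetic content of Lemma 4.3 for m = 3: the denominator factors 1 + e(h(3n+1)/(3k)) and 1 + e(h(3n+2)/(3k)) of f₃(h/k) are nonzero exactly when h/k lies in S₃₁.) -/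
/-- The arithmetic content of Lemma 4.3 for `m = 3`: the denominator factors
`1 + e(h(3n+1)/(3k))` and `1 + e(h(3n+2)/(3k))` of `f₃(h/k)` are nonzero exactly
when `h/k ∈ S₃₁`. -/
theorem f3_nonvanishing_m3 (h : ℤ) (k : ℕ) (hk : 1 ≤ k)
    (hodd : Odd h) (hcop : Int.gcd h (k : ℤ) = 1) :
    ((h % 6 = 1 ∨ h % 6 = 5) →
      (¬∃ n r : ℤ, h * (3 * n + 1) = 3 * (k : ℤ) * (2 * r + 1)) ∧
      (¬∃ n r : ℤ, h * (3 * n + 2) = 3 * (k : ℤ) * (2 * r + 1))) ∧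
    ((h % 6 = 3 ∧ Odd k) →
      ∃ n r : ℤ, 0 ≤ n ∧ n < (k : ℤ) ∧
        (h * (3 * n + 1) = 3 * (k : ℤ) * (2 * r + 1) ∨
          h * (3 * n + 2) = 3 * (k : ℤ) * (2 * r + 1))) := by
  have key : ∀ c n r : ℤ, ¬ (3 : ℤ) ∣ c → ¬ (3 : ℤ) ∣ h →
      h * (3 * n + c) ≠ 3 * (k : ℤ) * (2 * r + 1) := by
    intro c n r hc hh e
    have hd : (3 : ℤ) ∣ h * (3 * n + c) := ⟨k * (2 * r + 1), by rw [e]; ring⟩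
    rcases Int.prime_three.dvd_or_dvd hd with h1 | h1
    · exact hh h1
    · exact hc (by omega)
  refine ⟨fun hm => ⟨?_, ?_⟩, ?_⟩
  · rintro ⟨n, r, e⟩
    exact key 1 n r (by norm_num) (by omega) e
  · rintro ⟨n, r, e⟩
    exact key 2 n r (by norm_num) (by omega) e
  · rintro ⟨hm, -⟩
    have h3 : ¬ (3 : ℤ) ∣ (k : ℤ) := by
      intro hd
      have h4 : (3 : ℤ) ∣ (Int.gcd h (k : ℤ) : ℤ) := Int.dvd_coe_gcd (by omega) hd
      rw [hcop] at h4
      norm_num at h4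
    have hh : h = 3 * (2 * (h / 6) + 1) := by omega
    refine ⟨(k : ℤ) / 3, h / 6, by omega, by omega, ?_⟩
    have h5 : 3 * ((k : ℤ) / 3) + 1 = k ∨ 3 * ((k : ℤ) / 3) + 2 = k := by omega
    rcases h5 with h5 | h5
    · left
      rw [h5]
      linear_combination (k : ℤ) * hh
    · right
      rw [h5]
      linear_combination (k : ℤ) * hh
end
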